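/- arXiv:2105.14508 — 3 statements merged into one kernel-verified Lean document; each statement's English description precedes it below -/
import Mathlib

section
/- Let q > 2 be an even prime power and r ≥ 4 even, and let B be the hypersurface of PG(r,q²) defined below with Tr_{GF(q)/GF(2)}(α^{q+1}/(β^q+β)²) = 0. Then |B| = q^{2r−1}+q^{2(r−2)}+q^{2(r−3)}+⋯+q²+1, and for every hyperplane Σ of PG(r,q²) the cardinality |B ∩ Σ| belongs to the set {n₁, n₂, n₃, n₄, n₅}, where n₁ = (q^{2(r−1)}−1)/(q²−1), n₂ = q^{2r−3}−q^{r−1}+q^{r−2}+(q^{2(r−2)}−1)/(q²−1), n₃ = q^{2r−3}+(q^{2(r−2)}−1)/(q²−1), n₄ = q^{2r−3}+q^{r−2}+(q^{2(r−2)}−1)/(q²−1), and n₅ = q^{2r−3}+(q^{2(r−1)}−1)/(q²−1). -/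
/-- The affine equation
`x_r^q − x_r + α^q(x₁^{2q}+⋯+x_{r−1}^{2q}) − α(x₁²+⋯+x_{r−1}²)
  = (β^q−β)(x₁^{q+1}+⋯+x_{r−1}^{q+1})`. -/
def affEq {F : Type*} [Field F] (q r : ℕ) (α β : F) (x : Fin (r + 1) → F) : Prop :=
  x (Fin.last r) ^ q - x (Fin.last r)
      + α ^ q * (∑ i : Fin (r + 1), if 1 ≤ i.1 ∧ i.1 < r then x i ^ (2 * q) else 0)
      - α * (∑ i : Fin (r + 1), if 1 ≤ i.1 ∧ i.1 < r then x i ^ 2 else 0)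
    = (β ^ q - β) * (∑ i : Fin (r + 1), if 1 ≤ i.1 ∧ i.1 < r then x i ^ (q + 1) else 0)

/-- The hypersurface `B` of `PG(r,q²)`: the affine points (X₀ ≠ 0) whose affine
coordinates satisfy `affEq`, together with the points at infinity (X₀ = 0)
satisfying `X₁² + ⋯ + X_{r−1}² = 0`. -/
noncomputable def Bset (F : Type*) [Field F] (q r : ℕ) (α β : F) :
    Set (Projectivization F (Fin (r + 1) → F)) :=
  {P | (P.rep 0 ≠ 0 ∧ affEq q r α β fun i => P.rep i / P.rep 0) ∨
       (P.rep 0 = 0 ∧ (∑ i : Fin (r + 1), if 1 ≤ i.1 ∧ i.1 < r then P.rep i ^ 2 else 0) = 0)}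

open Classical in
theorem fib_lemma {A B : Type*} (s : Finset A) (f : A → B) (S : Finset B)
    (hmaps : ∀ a ∈ s, f a ∈ S) (t : ℕ) (hfib : ∀ b ∈ S, (s.filter (fun a => f a = b)).card ≤ t)
    (hcard : S.card * t ≤ s.card) : ∀ b ∈ S, (s.filter (fun a => f a = b)).card = t := by
  have h1 := Finset.card_eq_sum_card_fiberwise (f := f) (s := s) (t := S) hmaps
  have h2 : ∑ b ∈ S, (s.filter (fun a => f a = b)).card = ∑ b ∈ S, t := by
    apply le_antisymm (Finset.sum_le_sum hfib)
    rw [← h1]; simpa using hcard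
  exact (Finset.sum_eq_sum_iff_of_le hfib).1 h2

theorem root_bound {F : Type*} [Field F] (s : Finset F) (p : Polynomial F) (hp : p ≠ 0) (d : ℕ)
    (hd : p.natDegree ≤ d) (h : ∀ x ∈ s, p.eval x = 0) : s.card ≤ d := by
  classical
  refine le_trans (Polynomial.card_le_degree_of_subset_roots (p := p) ?_) hd
  intro x hx
  exact (Polynomial.mem_roots hp).2 (h x hx)

section
variable {F : Type} [Field F] [Fintype F]

theorem q_facts {q m : ℕ} (hm : q = 2 ^ m) (hq2 : 2 < q) (hF : Fintype.card F = q ^ 2) :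
    CharP F 2 := by
  obtain ⟨p, hp⟩ := CharP.exists F
  obtain ⟨k, hpp, hk⟩ := FiniteField.card F p
  have : p ∣ 2 ^ (m * 2) := by
    rw [pow_mul, ← hm, ← hF, hk]; exact dvd_pow_self _ k.ne_zero
  have h2 := (Nat.prime_dvd_prime_iff_eq hpp Nat.prime_two).1 (hpp.dvd_of_dvd_pow this)
  exact h2 ▸ hp

theorem pq_add [CharP F 2] {q m : ℕ} (hm : q = 2 ^ m) (x y : F) : (x + y) ^ q = x ^ q + y ^ q := by
  subst hm; exact add_pow_char_pow ..

theorem pq_sum [CharP F 2] {q m : ℕ} (hm : q = 2 ^ m) {ι : Type*} (s : Finset ι) (x : ι → F) :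
    (∑ i ∈ s, x i) ^ q = ∑ i ∈ s, x i ^ q := by
  subst hm; exact sum_pow_char_pow ..

theorem pq_pq {q : ℕ} (hF : Fintype.card F = q ^ 2) (x : F) : (x ^ q) ^ q = x := by
  rw [← pow_mul, ← sq, ← hF, FiniteField.pow_card]

open Classical in
theorem card_K_le {q : ℕ} (hq2 : 2 < q) : (Finset.univ.filter (fun x : F => x ^ q = x)).card ≤ q := by
  apply root_bound _ (Polynomial.X ^ q - Polynomial.X)
  · exact FiniteField.X_pow_card_sub_X_ne_zero F (by omega)
  · rw [FiniteField.X_pow_card_sub_X_natDegree_eq F (by omega)]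
  · intro x hx; simp at hx; simp [hx]

open Classical in
theorem T_fib [CharP F 2] {q m : ℕ} (hm : q = 2 ^ m) (hq2 : 2 < q) (hF : Fintype.card F = q ^ 2)
    (k : F) (hk : k ^ q = k) : (Finset.univ.filter (fun x : F => x ^ q + x = k)).card = q := by
  refine fib_lemma Finset.univ (fun x : F => x ^ q + x) (Finset.univ.filter (fun x : F => x ^ q = x)) 
    ?_ q ?_ ?_ k (by simpa using hk)
  · intro a _
    simp [pq_add hm, pq_pq hF, add_comm]
  · intro b _
    have e : (Polynomial.X ^ q + Polynomial.X - Polynomial.C b : Polynomial F).natDegree = q := by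
      rw [add_sub_assoc]
      have h1 : (Polynomial.X - Polynomial.C b : Polynomial F).natDegree = 1 :=
        Polynomial.natDegree_X_sub_C b
      rw [Polynomial.natDegree_add_eq_left_of_natDegree_lt, Polynomial.natDegree_X_pow]
      rw [h1, Polynomial.natDegree_X_pow]; omega
    apply root_bound _ (Polynomial.X ^ q + Polynomial.X - Polynomial.C b) _ _ e.le
    · intro x hx; simp at hx; simp [hx]
    · intro h; rw [h] at e; simp at e; omega
  · rw [Finset.card_univ, hF, sq]; exact Nat.mul_le_mul_right _ (card_K_le hq2)

open Classical in
theorem card_K [CharP F 2] {q m : ℕ} (hm : q = 2 ^ m) (hq2 : 2 < q) (hF : Fintype.card F = q ^ 2) :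
    (Finset.univ.filter (fun x : F => x ^ q = x)).card = q := by
  have h := T_fib hm hq2 hF 0 (by simp; omega)
  refine Eq.trans ?_ h; congr 1; ext x; simp [CharTwo.add_eq_zero]

open Classical in
theorem N_fib {q : ℕ} (hq2 : 2 < q) (hF : Fintype.card F = q ^ 2)
    (k : F) (hk : k ^ q = k) (hk0 : k ≠ 0) :
    (Finset.univ.filter (fun x : F => x ^ (q+1) = k)).card = q + 1 := by
  have := fib_lemma (Finset.univ.filter (fun x : F => x ≠ 0)) (fun x : F => x ^ (q+1))
    (Finset.univ.filter (fun x : F => x ^ q = x ∧ x ≠ 0)) 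
    ?_ (q+1) ?_ ?_ k (by simpa using ⟨hk, hk0⟩)
  · refine Eq.trans ?_ this; rw [Finset.filter_filter]; congr 1; ext x; simp
    rintro rfl rfl
    simp at hk0
  · intro a ha
    simp at ha
    simp [ha, pow_succ, mul_pow, pq_pq hF, mul_comm]
  · intro b _
    apply root_bound _ (Polynomial.X ^ (q+1) - Polynomial.C b) (Polynomial.X_pow_sub_C_ne_zero (by omega) _) _
      (Polynomial.natDegree_X_pow_sub_C).le
    · intro x hx; simp at hx; simp [hx]
  · have h1 : (Finset.univ.filter (fun x : F => x ≠ 0)).card = q^2 - 1 := by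
      rw [Finset.filter_ne', Finset.card_erase_of_mem (Finset.mem_univ _), Finset.card_univ, hF]
    have h2 : (Finset.univ.filter (fun x : F => x ^ q = x ∧ x ≠ 0)).card ≤ q - 1 := by
      have : (Finset.univ.filter (fun x : F => x ^ q = x ∧ x ≠ 0)) =
        (Finset.univ.filter (fun x : F => x ^ q = x)).erase 0 := by
        ext x; simp [and_comm]
      rw [this, Finset.card_erase_of_mem (by simp; omega)]
      exact Nat.sub_le_sub_right (card_K_le hq2) 1
    rw [h1]
    refine (Nat.mul_le_mul_right _ h2).trans (le_of_eq ?_)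
    obtain ⟨c, rfl⟩ : ∃ c, q = c + 1 := ⟨q - 1, by omega⟩
    simp only [Nat.add_sub_cancel]
    apply Nat.eq_sub_of_add_eq; ring

open Classical in
theorem AS [CharP F 2] {q m : ℕ} (hm : q = 2 ^ m) (hq2 : 2 < q) (hF : Fintype.card F = q ^ 2)
    (e : F) (he : e ^ q = e) (htr : ∑ i ∈ Finset.range m, e ^ 2 ^ i = 0) :
    ∃ u : F, u ^ q = u ∧ u ^ 2 + u = e := by
  have hm0 : ∃ c, m = c + 1 := by
    rcases m with _ | c
    · simp at hm; omega
    · exact ⟨c, rfl⟩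
  obtain ⟨c, hc⟩ := hm0
  have := fib_lemma (Finset.univ.filter (fun x : F => x ^ q = x)) (fun x : F => x ^ 2 + x)
    (Finset.univ.filter (fun x : F => x ^ q = x ∧ ∑ i ∈ Finset.range m, x ^ 2 ^ i = 0)) 
    ?_ 2 ?_ ?_ e (by simpa using ⟨he, htr⟩)
  · obtain ⟨u, hu⟩ := Finset.card_pos.1 (this ▸ Nat.two_pos)
    simp at hu
    exact ⟨u, hu⟩
  · intro a ha
    simp at ha
    simp only [Finset.mem_filter, Finset.mem_univ, true_and]
    refine ⟨by rw [pq_add hm, ← pow_mul, mul_comm 2 q, pow_mul, ha], ?_⟩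
    have h1 : ∀ i, (a ^ 2 + a) ^ 2 ^ i = a ^ 2 ^ (i+1) - a ^ 2 ^ i := by
      intro i
      rw [add_pow_char_pow, ← pow_mul, ← pow_succ', CharTwo.sub_eq_add]
    simp_rw [h1]
    rw [Finset.sum_range_sub (fun i => a ^ 2 ^ i), ← hm, ha]; simp
  · intro b _
    have e : (Polynomial.X ^ 2 + Polynomial.X - Polynomial.C b : Polynomial F).natDegree = 2 := by
      compute_degree!
    apply root_bound _ (Polynomial.X ^ 2 + Polynomial.X - Polynomial.C b) _ _ e.le
    · intro x hx; simp at hx; simp [hx]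
    · intro h; rw [h] at e; simp at e
  · rw [card_K hm hq2 hF, hm, hc, pow_succ]
    refine Nat.mul_le_mul_right _ ?_
    apply root_bound _ (∑ i ∈ Finset.range (c+1), (Polynomial.X : Polynomial F) ^ 2 ^ i)
    · intro h
      have := congrArg (fun p => Polynomial.coeff p 1) h
      simp [Polynomial.coeff_X_pow, Finset.sum_range_succ'] at this
      rw [Finset.filter_false_of_mem] at this
      · simp at this
      · intro i _ h
        have := Nat.one_lt_two_pow (n := i+1) (by omega)
        omega
    · refine Polynomial.natDegree_sum_le_of_forall_le _ _ ?_
      intro i hi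
      rw [Polynomial.natDegree_X_pow]
      exact Nat.pow_le_pow_right (by norm_num) (by simp at hi; omega)
    · intro x hx; simp at hx; rw [Polynomial.eval_finsetSum]; simpa using hx.2

open Classical in
theorem H_count {q : ℕ} (hq2 : 2 < q) (hF : Fintype.card F = q ^ 2)
    (hadd : ∀ x y : F, (x - y) ^ q = x ^ q - y ^ q) (n : ℕ) : ∀ (k : F), k ^ q = k → 
    (q : ℤ) * (Nat.card {x : Fin n → F // ∑ i, x i ^ (q+1) = k} : ℤ) =
      q ^ (2 * n) - (-1) ^ n * q ^ n + if k = 0 then (-1) ^ n * (q:ℤ) ^ (n+1) else 0 := by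
  classical
  induction n with
  | zero =>
    intro k _
    by_cases h : k = 0
    · subst h; simp
    · simp [h, Ne.symm h]
  | succ n ih =>
    intro k hk
    have e : {x : Fin (n+1) → F // ∑ i, x i ^ (q+1) = k} ≃ 
      Σ y : F, {x : Fin n → F // ∑ i, x i ^ (q+1) = k - y ^ (q+1)} :=
      { toFun := fun x => ⟨x.1 0, fun i => x.1 i.succ, by 
          have := x.2; rw [Fin.sum_univ_succ] at this; exact eq_sub_of_add_eq' this⟩
        invFun := fun p => ⟨Fin.cons p.1 p.2.1, by
          rw [Fin.sum_univ_succ]; simp [p.2.2]⟩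
        left_inv := by
          intro x; ext i; refine Fin.cases ?_ (fun j => ?_) i <;> simp
        right_inv := by
          rintro ⟨y, x, hx⟩; rfl }
    rw [Nat.card_congr e, Nat.card_sigma]
    push_cast
    rw [Finset.mul_sum]
    have hy : ∀ y : F, (y^(q+1))^q = y^(q+1) := by
      intro y; rw [pow_succ, mul_pow, pq_pq hF, mul_comm]
    have : ∀ y ∈ (Finset.univ : Finset F), (q : ℤ) * (Nat.card {x : Fin n → F // ∑ i, x i ^ (q+1) = k - y ^ (q+1)} : ℤ)
       = (q ^ (2 * n) - (-1) ^ n * q ^ n) + if y ^ (q+1) = k then (-1) ^ n * (q:ℤ) ^ (n+1) else 0 := by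
      intro y _
      rw [ih (k - y^(q+1)) (by rw [hadd, hk, hy])]
      congr 1; simp only [sub_eq_zero]; exact if_congr eq_comm rfl rfl
    rw [Finset.sum_congr rfl this, Finset.sum_add_distrib, ← Finset.sum_filter, Finset.sum_const,
      Finset.sum_const, Finset.card_univ, hF]
    by_cases h : k = 0
    · subst h
      have : (Finset.univ.filter (fun x : F => x ^ (q+1) = 0)) = {0} := by ext; simp
      rw [this]; simp; ring
    · rw [N_fib hq2 hF k hk h]; simp [h]; ring

theorem slice {V : Type} [AddCommGroup V] [Module F V] (W : Submodule F V) (g : V →ₗ[F] F)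
    (w : V) (hw : w ∈ W) (hg : g w ≠ 0) (a : F) :
    Nat.card {z : V // z ∈ W ∧ g z = a} * Nat.card F = Nat.card W := by
  rw [← Nat.card_prod]
  refine Nat.card_congr
    { toFun := fun p => ⟨p.1.1 + p.2 • w, W.add_mem p.1.2.1 (W.smul_mem _ hw)⟩
      invFun := fun v => ⟨⟨v.1 - ((g v.1 - a) / g w) • w, W.sub_mem v.2 (W.smul_mem _ hw), by
        simp [hg]⟩, (g v.1 - a) / g w⟩
      left_inv := ?_
      right_inv := ?_ }
  · rintro ⟨⟨z, hz, h⟩, t⟩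
    simp [h, hg]
  · rintro ⟨v, hv⟩
    simp

theorem T_fib' [CharP F 2] {q m : ℕ} (hm : q = 2 ^ m) (hq2 : 2 < q) (hF : Fintype.card F = q ^ 2)
    (c k : F) (hk : k ^ q = k) : Nat.card {y : F // (y + c) ^ q + (y + c) = k} = q := by
  classical
  rw [Nat.card_congr (Equiv.subtypeEquiv (Equiv.addRight c) (q := fun y => y ^ q + y = k)
    (fun y => by simp)), Nat.card_eq_fintype_card, Fintype.card_subtype]
  exact T_fib hm hq2 hF k hk

theorem NN_mem [CharP F 2] {q m n : ℕ} (hm : q = 2 ^ m) (hF : Fintype.card F = q ^ 2)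
    (z : Fin n → F) : (∑ i, z i ^ (q+1)) ^ q = ∑ i, z i ^ (q+1) := by
  rw [pq_sum hm]
  refine Finset.sum_congr rfl fun i _ => ?_
  rw [pow_succ, mul_pow, pq_pq hF, mul_comm]

theorem aff_count [CharP F 2] {q m n : ℕ} (hm : q = 2 ^ m) (hq2 : 2 < q)
    (hF : Fintype.card F = q ^ 2) (α b : F) (hb : b ^ q = b) (G : (Fin n → F) → Prop) :
    Nat.card {p : (Fin n → F) × F // ((p.2 + α * (∑ i, p.1 i) ^ 2) ^ q + (p.2 + α * (∑ i, p.1 i) ^ 2)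
      = b * ∑ i, p.1 i ^ (q+1)) ∧ G p.1} = Nat.card {z // G z} * q := by
  have e : {p : (Fin n → F) × F // ((p.2 + α * (∑ i, p.1 i) ^ 2) ^ q + (p.2 + α * (∑ i, p.1 i) ^ 2)
      = b * ∑ i, p.1 i ^ (q+1)) ∧ G p.1} ≃ Σ z : {z // G z}, {y : F // 
      (y + α * (∑ i, z.1 i) ^ 2) ^ q + (y + α * (∑ i, z.1 i) ^ 2) = b * ∑ i, z.1 i ^ (q+1)} :=
    { toFun := fun p => ⟨⟨p.1.1, p.2.2⟩, ⟨p.1.2, p.2.1⟩⟩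
      invFun := fun s => ⟨(s.1.1, s.2.1), s.2.2, s.1.2⟩
      left_inv := fun _ => rfl
      right_inv := fun _ => rfl }
  classical
  rw [Nat.card_congr e, Nat.card_sigma]
  rw [Finset.sum_congr rfl (fun z _ => T_fib' hm hq2 hF _ _ (by
    rw [mul_pow, hb, NN_mem hm hF]))]
  simp

theorem quad_count [CharP F 2] {q m n : ℕ} (hm : q = 2 ^ m) (hq2 : 2 < q)
    (hF : Fintype.card F = q ^ 2) (hn : Odd n) (α b : F) (hα : α ≠ 0) (hb : b ^ q = b) (hb0 : b ≠ 0)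
    (htr : ∑ i ∈ Finset.range m, (α ^ (q + 1) / b ^ 2) ^ 2 ^ i = 0) (c0 : F) (c : Fin n → F) :
    ∃ k : F, k ^ q = k ∧ 
    Nat.card {z : Fin n → F // (c0 + ∑ i, c i * z i + α * (∑ i, z i) ^ 2) ^ q + 
      (c0 + ∑ i, c i * z i + α * (∑ i, z i) ^ 2) = b * ∑ i, z i ^ (q+1)} =
    Nat.card {z : Fin n → F // ∑ i, z i ^ (q+1) = k} := by
  have hnn : (n : F) = 1 := by
    obtain ⟨j, rfl⟩ := hn
    push_cast; rw [CharTwo.two_eq_zero]; simp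
  have two : (2 : F) = 0 := CharTwo.two_eq_zero
  have hpp := pq_pq (F := F) hF
  have hadd := fun x y : F => pq_add hm x y
  obtain ⟨a, ha⟩ : ∃ a : F, a ^ 2 = α := by
    have := (frobeniusEquiv F 2).surjective α
    obtain ⟨a, ha⟩ := this
    exact ⟨a, by simpa [frobenius_def] using ha⟩
  have ha0 : a ≠ 0 := by rintro rfl; simp at ha; exact hα ha.symm
  set A := a ^ q with hA
  have hAq : A ^ q = a := hpp a
  have hA0 : A ≠ 0 := pow_ne_zero _ ha0
  set e : F := a * A / b with he
  have he0 : e ≠ 0 := by simp [he, ha0, hA0, hb0]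
  have heq : e ^ q = e := by rw [he, div_pow, mul_pow, hAq, ← hA, hb, mul_comm]
  have hee : α ^ (q+1) / b ^ 2 = e ^ 2 := by
    rw [he, ← ha, pow_succ, ← pow_mul, mul_comm 2 q, pow_mul, ← hA]; field_simp
  obtain ⟨u, hu, hue⟩ := AS hm hq2 hF (e^2) (by rw [← pow_mul, mul_comm, pow_mul, heq]) (hee ▸ htr)
  set t : F := (u + e) / e with ht
  have htq : t ^ q = t := by rw [ht, div_pow, hadd, hu, heq]
  have hte : t ^ 2 * e + t = 1 := by
    rw [ht]; field_simp
    linear_combination hue + (u * e + e ^ 2) * two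
  clear_value t
  -- the shift
  let w : Fin n → F := fun i => (c i / b) ^ q
  have hw : ∀ i, b * (w i) ^ q = c i := by intro i; simp only [w]; rw [hpp]; field_simp
  let K0 : F := (c0 + ∑ i, c i * w i + α * (∑ i, w i) ^ 2) ^ q + 
      (c0 + ∑ i, c i * w i + α * (∑ i, w i) ^ 2) + b * ∑ i, w i ^ (q+1)
  have hK0 : K0 ^ q = K0 := by
    simp only [K0]
    rw [hadd, hadd, hpp, mul_pow, hb, NN_mem hm hF]; ring
  refine ⟨K0 / b, by rw [div_pow, hK0, hb], ?_⟩
  let S : (Fin n → F) → F := fun z => ∑ i, z i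
  let N : (Fin n → F) → F := fun z => ∑ i, z i ^ (q+1)
  let ell : (Fin n → F) → F := fun z => (a * S z) ^ q + a * S z
  let g : (Fin n → F) → (Fin n → F) := fun z i => z i + t * ell z * (A / b)
  have hellq : ∀ z, ell z ^ q = ell z := by
    intro z; simp only [ell]; rw [hadd, hpp]; ring
  have hSg : ∀ z, S (g z) = S z + t * ell z * (A / b) := by
    intro z; simp only [S, g]; rw [Finset.sum_add_distrib]; simp [hnn]
  have hellg : ∀ z, ell (g z) = ell z := by
    intro z
    have h1 : (a * (t * ell z * (A / b))) ^ q = a * (t * ell z * (A / b)) := by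
      rw [show a * (t * ell z * (A / b)) = t * ell z * e by rw [he]; ring, mul_pow, mul_pow, htq, heq,
        hellq]
    show (a * S (g z)) ^ q + a * S (g z) = (a * S z) ^ q + a * S z
    rw [hSg, mul_add, hadd, h1]
    linear_combination (a * (t * ell z * (A / b))) * two
  have hinv : Function.Involutive g := by
    intro z; funext i
    show z i + t * ell z * (A / b) + t * ell (g z) * (A / b) = z i
    rw [hellg]; linear_combination (t * ell z * (A / b)) * two
  have hNadd : ∀ (z y : Fin n → F), N (fun i => z i + y i) = N z + N y + 
      ((∑ i, z i * y i ^ q) ^ q + ∑ i, z i * y i ^ q) := by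
    intro z y
    simp only [N]
    rw [pq_sum hm, ← Finset.sum_add_distrib, ← Finset.sum_add_distrib, ← Finset.sum_add_distrib]
    refine Finset.sum_congr rfl fun i _ => ?_
    rw [pow_succ, hadd, mul_pow, hpp]; ring
  have hell2 : ∀ z, ell z ^ 2 = (α * S z ^ 2) ^ q + α * S z ^ 2 := by
    intro z
    simp only [ell]; rw [← ha, ← mul_pow, ← pow_mul, mul_comm 2 q, pow_mul]
    linear_combination ((a * S z) ^ q * (a * S z)) * two
  have hNg : ∀ z, b * N (g z) = b * N z + ((α * S z ^ 2) ^ q + α * S z ^ 2) := by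
    intro z
    rw [← hell2]
    have h1 := hNadd z (fun _ => t * ell z * (A / b))
    have h2 : (t * ell z * (A / b)) ^ q = t * ell z * (a / b) := by
      rw [mul_pow, mul_pow, div_pow, htq, hellq, hAq, hb]
    rw [← Finset.sum_mul, h2] at h1
    have h3 : N (fun _ => t * ell z * (A / b)) = t ^ 2 * ell z ^ 2 * (e / b) := by
      simp only [N]; simp [hnn, -mul_eq_mul_left_iff]; rw [pow_succ, h2, he]; ring
    rw [h3] at h1
    have h4 : ((∑ i, z i) * (t * ell z * (a / b))) ^ q + (∑ i, z i) * (t * ell z * (a / b)) = 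
       t * ell z ^ 2 / b := by
      have : (∑ i, z i) * (t * ell z * (a / b)) = (t * ell z / b) * (a * S z) := by simp only [S]; ring
      rw [this, mul_pow, div_pow, mul_pow, htq, hellq, hb]
      simp only [ell]; ring
    rw [h4] at h1
    show b * N (fun i => z i + t * ell z * (A / b)) = _
    rw [h1]
    field_simp
    linear_combination (ell z ^ 2) * hte
  refine Nat.card_congr (((Equiv.addRight w).subtypeEquiv (p := fun z => b * N z + ((α * S z ^ 2) ^ q + α * S z ^ 2) = K0) ?_).symm.trans
     ((hinv.toPerm g).subtypeEquiv ?_))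
  · intro z
    have h1 := hNadd z w
    have h5 : b * ((∑ i, z i * w i ^ q) ^ q + ∑ i, z i * w i ^ q) = (∑ i, c i * z i) ^ q + ∑ i, c i * z i := by
      have : ∑ i, c i * z i = b * ∑ i, z i * w i ^ q := by
        rw [Finset.mul_sum]; refine Finset.sum_congr rfl fun i _ => ?_
        rw [← hw]; ring
      rw [this, mul_pow, hb]; ring
    have h6 : ∑ i, (Equiv.addRight w) z i ^ (q+1) = N (fun i => z i + w i) := rfl
    have h7 : ∑ i, (Equiv.addRight w) z i = S z + S w := by simp [S, Finset.sum_add_distrib]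
    have h8 : ∑ i, c i * (Equiv.addRight w) z i = ∑ i, c i * z i + ∑ i, c i * w i := by
      simp [mul_add, Finset.sum_add_distrib]
    rw [h6, h7, h8, h1]
    have h9 : c0 + (∑ i, c i * z i + ∑ i, c i * w i) + α * (S z + S w) ^ 2 = 
       (c0 + ∑ i, c i * w i + α * (S w) ^ 2) + ∑ i, c i * z i + α * S z ^ 2 := by
      linear_combination (α * S z * S w) * two
    rw [h9, hadd, hadd _ (∑ i, c i * z i), mul_add, mul_add, h5]
    show _ = (c0 + ∑ i, c i * w i + α * (S w) ^ 2) ^ q + 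
      (c0 + ∑ i, c i * w i + α * (S w) ^ 2) + b * N w ↔ _
    generalize (c0 + ∑ i, c i * w i + α * (S w) ^ 2) ^ q = X1
    generalize (c0 + ∑ i, c i * w i + α * (S w) ^ 2) = X2
    generalize (∑ i, c i * z i) ^ q = X3
    generalize (∑ i, c i * z i) = X4
    generalize (α * S z ^ 2) ^ q = X5
    generalize α * S z ^ 2 = X6
    generalize b * N z = X7
    generalize b * N w = X8
    constructor
    · intro h; linear_combination -h + (X5 + X6 - X8) * two
    · intro h; linear_combination -h + (X5 + X6 - X8) * two
  · intro z
    show _ ↔ N (g z) = K0 / b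
    rw [← hNg, eq_div_iff hb0, mul_comm]

theorem quad_count' [CharP F 2] {q m n : ℕ} (hm : q = 2 ^ m) (hq2 : 2 < q)
    (hF : Fintype.card F = q ^ 2) (hn : Odd n) (α b : F) (hα : α ≠ 0) (hb : b ^ q = b) (hb0 : b ≠ 0)
    (htr : ∑ i ∈ Finset.range m, (α ^ (q + 1) / b ^ 2) ^ 2 ^ i = 0) (c0 : F) (c : Fin n → F) (C : ℕ)
    (hC : C = Nat.card {z : Fin n → F // (c0 + ∑ i, c i * z i + α * (∑ i, z i) ^ 2) ^ q + 
      (c0 + ∑ i, c i * z i + α * (∑ i, z i) ^ 2) = b * ∑ i, z i ^ (q+1)}) :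
    C = q ^ (2 * n - 1) - q ^ n + q ^ (n - 1) ∨ C = q ^ (2 * n - 1) + q ^ (n - 1) := by
  obtain ⟨k, hk, h⟩ := quad_count hm hq2 hF hn α b hα hb hb0 htr c0 c
  have h2 := H_count hq2 hF (by intro x y; rw [CharTwo.sub_eq_add, CharTwo.sub_eq_add, pq_add hm]) n k hk
  rw [← h, ← hC, hn.neg_one_pow] at h2
  have hn1 : 1 ≤ n := hn.pos
  obtain ⟨l, rfl⟩ : ∃ l, n = l + 1 := ⟨n - 1, by omega⟩
  have hq0 : (q : ℤ) ≠ 0 := by have : q ≠ 0 := by omega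
                               exact_mod_cast this
  by_cases hk0 : k = 0
  · left
    have hle : q ^ (l+1) ≤ q ^ (2 * (l+1) - 1) := Nat.pow_le_pow_right (by omega) (by omega)
    zify [hle]
    rw [if_pos hk0] at h2
    apply mul_left_cancel₀ hq0
    rw [h2, show 2 * (l+1) - 1 = 2 * l + 1 by omega]
    simp only [Nat.add_sub_cancel]; ring
  · right
    zify
    rw [if_neg hk0] at h2
    apply mul_left_cancel₀ hq0
    rw [h2, show 2 * (l+1) - 1 = 2 * l + 1 by omega]
    simp only [Nat.add_sub_cancel]; ring
end

section
variable {F : Type} [Field F] [Fintype F]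

theorem proj_inf {V : Type} [AddCommGroup V] [Module F V] (W : Submodule F V) [Finite V] :
    Nat.card {P : Projectivization F V // P.rep ∈ W} = (Nat.card W - 1) / (Nat.card F - 1) := by
  rw [← Projectivization.card'' F W]
  symm
  have hmem : ∀ x : W, ∀ hx : (x : V) ≠ 0, (Projectivization.mk F (x : V) hx).rep ∈ W := by
    intro x hx
    obtain ⟨a, ha⟩ := Projectivization.exists_smul_eq_mk_rep F (x : V) hx
    rw [← ha]; exact W.smul_mem _ x.2
  refine Nat.card_congr (Equiv.ofBijective (fun P : Projectivization F W =>
    (⟨Projectivization.mk F (P.rep : V) (by simpa using P.rep_nonzero), hmem _ _⟩ :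
      {P : Projectivization F V // P.rep ∈ W})) ⟨?_, ?_⟩)
  · intro P Q h
    simp only [Subtype.mk.injEq] at h
    rw [Projectivization.mk_eq_mk_iff'] at h
    obtain ⟨a, ha⟩ := h
    rw [← P.mk_rep, ← Q.mk_rep, Projectivization.mk_eq_mk_iff']
    exact ⟨a, Subtype.ext ha⟩
  · rintro ⟨P, hP⟩
    have h0 : (⟨P.rep, hP⟩ : W) ≠ 0 := by
      intro h; exact P.rep_nonzero (congrArg Subtype.val h)
    refine ⟨Projectivization.mk F ⟨P.rep, hP⟩ h0, ?_⟩
    apply Subtype.ext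
    obtain ⟨a, ha⟩ := Projectivization.exists_smul_eq_mk_rep F (⟨P.rep, hP⟩ : W) h0
    refine Eq.trans ?_ P.mk_rep
    rw [Projectivization.mk_eq_mk_iff]
    refine ⟨a, ?_⟩
    rw [← ha]; rfl

/-- The vector `(1, z, y)`. -/
def vec {n : ℕ} (p : (Fin n → F) × F) : Fin (n + 1 + 1) → F := Fin.cons 1 (Fin.snoc p.1 p.2)

theorem vec_zero {n : ℕ} (p : (Fin n → F) × F) : vec p 0 = 1 := rfl

theorem proj_aff {n : ℕ} (G : (Fin (n + 1 + 1) → F) → Prop) :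
    Nat.card {P : Projectivization F (Fin (n + 1 + 1) → F) //
      P.rep 0 ≠ 0 ∧ G (fun i => P.rep i / P.rep 0)} = Nat.card {p : (Fin n → F) × F // G (vec p)} := by
  symm
  have hv0 : ∀ p : (Fin n → F) × F, vec p ≠ 0 := by
    intro p h
    have := congrFun h 0
    rw [vec_zero] at this; simp at this
  have hrep : ∀ p : (Fin n → F) × F, (Projectivization.mk F (vec p) (hv0 p)).rep 0 ≠ 0 ∧ 
      (fun i => (Projectivization.mk F (vec p) (hv0 p)).rep i /
        (Projectivization.mk F (vec p) (hv0 p)).rep 0) = vec p := by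
    intro p
    obtain ⟨a, ha⟩ := Projectivization.exists_smul_eq_mk_rep F (vec p) (hv0 p)
    rw [← ha]
    have ha0 : (a : F) ≠ 0 := a.ne_zero
    constructor
    · simp [Units.smul_def, vec_zero]
    · funext i; simp [Units.smul_def, vec_zero]
  refine Nat.card_congr (Equiv.ofBijective (fun p : {p : (Fin n → F) × F // G (vec p)} =>
    (⟨Projectivization.mk F (vec p.1) (hv0 p.1), (hrep p.1).1, by rw [(hrep p.1).2]; exact p.2⟩ : 
    {P : Projectivization F (Fin (n + 1 + 1) → F) //
      P.rep 0 ≠ 0 ∧ G (fun i => P.rep i / P.rep 0)})) ⟨?_, ?_⟩)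
  · intro p p' h
    simp only [Subtype.mk.injEq] at h
    have h1 := (hrep p.1).2
    rw [h, (hrep p'.1).2] at h1
    have h2 := (Fin.cons_injective2 h1).2
    have h3 := Fin.snoc_injective2 h2
    exact Subtype.ext (Prod.ext h3.1.symm h3.2.symm)
  · rintro ⟨P, hP0, hP⟩
    have hvec : vec (fun i : Fin n => P.rep i.castSucc.succ / P.rep 0, P.rep (Fin.last (n+1)) / P.rep 0) = 
      fun i => P.rep i / P.rep 0 := by
      funext i
      refine Fin.cases ?_ (fun j => ?_) i
      · simp [vec, hP0]
      · refine Fin.lastCases ?_ (fun k => ?_) j <;> simp [vec]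
    refine ⟨⟨_, by rw [hvec]; exact hP⟩, ?_⟩
    apply Subtype.ext
    refine Eq.trans ?_ P.mk_rep
    rw [Projectivization.mk_eq_mk_iff']
    refine ⟨(P.rep 0)⁻¹, ?_⟩
    show _ = vec _
    rw [hvec]; funext i; simp [div_eq_inv_mul]

theorem sum_mid {n : ℕ} (v : Fin (n + 1 + 1) → F) (φ : F → F) :
    (∑ i : Fin (n + 1 + 1), if 1 ≤ i.1 ∧ i.1 < n + 1 then φ (v i) else 0) = 
      ∑ i : Fin n, φ (v i.castSucc.succ) := by
  rw [Fin.sum_univ_succ, Fin.sum_univ_castSucc]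
  simp

theorem vec_mid {n : ℕ} (p : (Fin n → F) × F) (i : Fin n) : vec p i.castSucc.succ = p.1 i := by
  simp [vec]

theorem vec_last {n : ℕ} (p : (Fin n → F) × F) : vec p (Fin.last (n+1)) = p.2 := by
  rw [← Fin.succ_last]; simp [vec]

theorem affEq_vec [CharP F 2] {q m n : ℕ} (hm : q = 2 ^ m) (α β : F) (p : (Fin n → F) × F) :
    affEq q (n+1) α β (vec p) ↔ (p.2 + α * (∑ i, p.1 i) ^ 2) ^ q + (p.2 + α * (∑ i, p.1 i) ^ 2)
      = (β ^ q + β) * ∑ i, p.1 i ^ (q+1) := by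
  unfold affEq
  rw [sum_mid (vec p) (fun x => x ^ (2 * q)), sum_mid (vec p) (fun x => x ^ 2),
    sum_mid (vec p) (fun x => x ^ (q+1))]
  simp only [vec_mid, vec_last, CharTwo.sub_eq_add]
  have h1 : (∑ i, p.1 i) ^ 2 = ∑ i, p.1 i ^ 2 := sum_pow_char 2 _ _
  rw [h1, pq_add hm, mul_pow, pq_sum hm]
  simp only [← pow_mul]
  constructor <;> intro h <;> rw [← h] <;> ring

/-- The functional `X₁ + ⋯ + X_{r-1}`. -/
def Sfun (n : ℕ) : (Fin (n + 1 + 1) → F) →ₗ[F] F := ∑ i : Fin n, LinearMap.proj i.castSucc.succ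

theorem Sfun_apply (n : ℕ) (v : Fin (n + 1 + 1) → F) : Sfun n v = ∑ i : Fin n, v i.castSucc.succ := by
  simp [Sfun]

/-- The subspace `X₀ = 0, X₁ + ⋯ + X_{r-1} = 0`. -/
def W2 (F : Type) [Field F] (n : ℕ) : Submodule F (Fin (n + 1 + 1) → F) :=
  LinearMap.ker (LinearMap.proj 0 : (Fin (n + 1 + 1) → F) →ₗ[F] F) ⊓ LinearMap.ker (Sfun n)

theorem mem_W2 {n : ℕ} (v : Fin (n + 1 + 1) → F) : 
    v ∈ W2 F n ↔ v 0 = 0 ∧ ∑ i : Fin n, v i.castSucc.succ = 0 := by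
  simp [W2, Sfun_apply]

theorem card_inf_ker {V : Type} [AddCommGroup V] [Module F V] (W : Submodule F V) (g : V →ₗ[F] F)
    (w : V) (hw : w ∈ W) (hg : g w ≠ 0) :
    Nat.card ↥(W ⊓ LinearMap.ker g) * Nat.card F = Nat.card W := slice W g w hw hg 0

theorem card_W2 {q n : ℕ} (hq : 0 < q) (hn : 0 < n) (hF : Fintype.card F = q ^ 2) :
    Nat.card (W2 F n) = (q ^ 2) ^ n := by
  have hF' : Nat.card F = q ^ 2 := by rw [Nat.card_eq_fintype_card, hF]
  have h1 := card_inf_ker (⊤ : Submodule F (Fin (n + 1 + 1) → F)) (LinearMap.proj 0) (Pi.single 0 1)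
    trivial (by simp)
  rw [top_inf_eq] at h1
  have h2 := card_inf_ker (LinearMap.ker (LinearMap.proj 0 : (Fin (n + 1 + 1) → F) →ₗ[F] F)) (Sfun n)
    (Pi.single (Fin.castSucc ⟨0, hn⟩).succ 1) (by simp [Pi.single_apply]) (by
      rw [Sfun_apply, Finset.sum_eq_single (⟨0, hn⟩ : Fin n)]
      · rw [Pi.single_eq_same]; exact one_ne_zero
      · intro j _ hj
        rw [Pi.single_eq_of_ne]
        intro h; exact hj (Fin.castSucc_injective _ (Fin.succ_injective _ h))
      · simp)
  have h3 : Nat.card (⊤ : Submodule F (Fin (n + 1 + 1) → F)) = (q ^ 2) ^ (n+2) := by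
    rw [Nat.card_congr (Submodule.topEquiv (R := F) (M := Fin (n + 1 + 1) → F)).toEquiv]
    simp [hF]
  rw [h3, ← h2, hF'] at h1
  have hq2 : 0 < q ^ 2 := by positivity
  refine Nat.eq_of_mul_eq_mul_right hq2 (Nat.eq_of_mul_eq_mul_right hq2 ?_)
  exact h1.trans (by ring)

theorem B_split [CharP F 2] {q m n : ℕ} (hm : q = 2 ^ m) (α β : F)
    (f : (Fin (n + 1 + 1) → F) →ₗ[F] F) :
    Nat.card ↥(Bset F q (n+1) α β ∩ {P | f P.rep = 0}) = 
    Nat.card {p : (Fin n → F) × F // ((p.2 + α * (∑ i, p.1 i) ^ 2) ^ q + (p.2 + α * (∑ i, p.1 i) ^ 2)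
      = (β ^ q + β) * ∑ i, p.1 i ^ (q+1)) ∧ f (vec p) = 0} + 
    (Nat.card ↥(W2 F n ⊓ LinearMap.ker f) - 1) / (Nat.card F - 1) := by
  rw [← proj_inf]
  have h := proj_aff (F := F) (n := n) (fun v => affEq q (n+1) α β v ∧ f v = 0)
  simp only [affEq_vec hm] at h
  rw [← h]
  have : Bset F q (n+1) α β ∩ {P | f P.rep = 0} = 
    {P | P.rep 0 ≠ 0 ∧ affEq q (n+1) α β (fun i => P.rep i / P.rep 0) ∧ f (fun i => P.rep i / P.rep 0) = 0}
    ∪ {P | P.rep ∈ W2 F n ⊓ LinearMap.ker f} := by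
    ext P
    have h2 : (∑ i, P.rep (Fin.castSucc i).succ) ^ 2 = ∑ i : Fin n, P.rep (Fin.castSucc i).succ ^ 2 :=
      sum_pow_char 2 _ _
    have h3 : f (fun i => P.rep i / P.rep 0) = (P.rep 0)⁻¹ * f P.rep := by
      rw [← smul_eq_mul, ← map_smul]; congr 1; funext i; simp [div_eq_inv_mul]
    simp only [Bset, Set.mem_inter_iff, Set.mem_setOf_eq, Set.mem_union, Submodule.mem_inf, mem_W2,
      LinearMap.mem_ker, sum_mid P.rep (fun x => x ^ 2), ← h2, h3, pow_eq_zero_iff (two_ne_zero)]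
    by_cases h0 : P.rep 0 = 0
    · simp [h0]
    · simp [h0]
  rw [this]
  rw [Nat.card_coe_set_eq, Set.ncard_union_eq]
  · rfl
  · rw [Set.disjoint_left]
    rintro P ⟨h0, _⟩ h1
    exact h0 ((mem_W2 _).1 h1.1).1
end

section
variable {F : Type} [Field F] [Fintype F]

theorem f_vec {n : ℕ} (f : (Fin (n + 1 + 1) → F) →ₗ[F] F) (v : Fin (n + 1 + 1) → F) :
    f v = f (Pi.single 0 1) * v 0 + ∑ i : Fin n, f (Pi.single i.castSucc.succ 1) * v i.castSucc.succ
      + f (Pi.single (Fin.last (n+1)) 1) * v (Fin.last (n+1)) := by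
  conv_lhs => rw [LinearMap.pi_apply_eq_sum_univ f v]
  rw [Fin.sum_univ_succ, Fin.sum_univ_castSucc]
  have : ∀ i : Fin (n+1+1), (fun j => if i = j then (1:F) else 0) = Pi.single i 1 := by
    intro i; funext j; simp [Pi.single_apply, eq_comm]
  simp only [this, smul_eq_mul, Fin.succ_last, add_assoc, mul_comm]

theorem hyp_count {q n : ℕ} (hq : 0 < q) (hF : Fintype.card F = q ^ 2) (a : F) (c : Fin (n + 1) → F)
    (hc : ∃ i, c i ≠ 0) : Nat.card {z : Fin (n + 1) → F // a + ∑ i, c i * z i = 0} = (q ^ 2) ^ n := by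
  classical
  obtain ⟨i, hi⟩ := hc
  let g : (Fin (n + 1) → F) →ₗ[F] F := ∑ i, c i • LinearMap.proj i
  have hg : ∀ z, g z = ∑ i, c i * z i := by intro z; simp [g]
  have h := slice (⊤ : Submodule F (Fin (n + 1) → F)) g (Pi.single i 1) trivial (by
    rw [hg]; simpa [Pi.single_apply] using hi) (-a)
  have hF' : Nat.card F = q ^ 2 := by rw [Nat.card_eq_fintype_card, hF]
  have h3 : Nat.card (⊤ : Submodule F (Fin (n + 1) → F)) = (q ^ 2) ^ (n+1) := by
    rw [Nat.card_congr (Submodule.topEquiv (R := F) (M := Fin (n + 1) → F)).toEquiv]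
    simp [hF]
  rw [h3, hF', pow_succ] at h
  refine Eq.trans ?_ (Nat.eq_of_mul_eq_mul_right (by positivity) h)
  refine Nat.card_congr (Equiv.subtypeEquivRight fun z => ?_)
  rw [hg]; simp [add_comm a, add_eq_zero_iff_eq_neg]

end

theorem main_aux (q n m : ℕ) (hm : q = 2 ^ m) (hq2 : 2 < q) (hn : Odd n) (hn3 : 3 ≤ n)
    (F : Type) [Field F] [Fintype F] (hF : Fintype.card F = q ^ 2)
    (α β : F) (hα : α ≠ 0) (hβ : β ^ q ≠ β)
    (htr : ∑ i ∈ Finset.range m, (α ^ (q + 1) / (β ^ q + β) ^ 2) ^ 2 ^ i = 0) :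
    Nat.card ↥(Bset F q (n+1) α β) = q ^ (2 * n + 1) + ∑ i ∈ Finset.range n, q ^ (2 * i) ∧
    ∀ f : Module.Dual F (Fin (n + 1 + 1) → F), f ≠ 0 →
      Nat.card ↥(Bset F q (n+1) α β ∩ {P | f P.rep = 0}) ∈
        ({(q ^ (2 * n) - 1) / (q ^ 2 - 1),
          q ^ (2 * n - 1) - q ^ n + q ^ (n - 1) + (q ^ (2 * (n - 1)) - 1) / (q ^ 2 - 1),
          q ^ (2 * n - 1) + (q ^ (2 * (n - 1)) - 1) / (q ^ 2 - 1),
          q ^ (2 * n - 1) + q ^ (n - 1) + (q ^ (2 * (n - 1)) - 1) / (q ^ 2 - 1),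
          q ^ (2 * n - 1) + (q ^ (2 * n) - 1) / (q ^ 2 - 1)} : Set ℕ) := by
  have : CharP F 2 := q_facts hm hq2 hF
  have hF' : Nat.card F = q ^ 2 := by rw [Nat.card_eq_fintype_card, hF]
  have hq0 : 0 < q := by omega
  set b := β ^ q + β with hbdef
  have hb0 : b ≠ 0 := by
    intro h; exact hβ (CharTwo.add_eq_zero.1 h)
  have hb : b ^ q = b := by rw [hbdef, pq_add hm, pq_pq hF, add_comm]
  have hW := card_W2 (F := F) hq0 (show 0 < n by omega) hF
  constructor
  · have h1 := B_split (F := F) (n := n) hm α β 0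
    have h2 := aff_count (n := n) hm hq2 hF α b hb (fun _ => True)
    have h3 : Bset F q (n+1) α β ∩ {P | (0 : (Fin (n + 1 + 1) → F) →ₗ[F] F) P.rep = 0} = Bset F q (n+1) α β := by
      ext; simp
    rw [h3] at h1
    simp only [LinearMap.zero_apply] at h1
    rw [h1]
    congr 1
    · refine Eq.trans (Nat.card_congr (Equiv.subtypeEquivRight fun z => ?_)) (h2.trans ?_)
      · simp [hbdef]
      · rw [Nat.card_congr (Equiv.subtypeUnivEquiv (fun _ => trivial))]
        simp [hF]; ring
    · rw [LinearMap.ker_zero, inf_top_eq, hW, hF', ← Nat.geomSum_eq (by nlinarith)]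
      simp only [pow_mul]
  · intro f hf
    rw [B_split hm α β f, ← hbdef, hF']
    set c : Fin n → F := fun i => f (Pi.single i.castSucc.succ 1) with hc
    set a := f (Pi.single 0 1) with ha
    set d := f (Pi.single (Fin.last (n+1)) 1) with hd
    have hfv : ∀ p : (Fin n → F) × F, f (vec p) = a + ∑ i, c i * p.1 i + d * p.2 := by
      intro p; rw [f_vec f]; simp only [vec_zero, vec_mid, vec_last, mul_one]; rfl
    simp only [hfv]
    obtain ⟨l, rfl⟩ : ∃ l, n = l + 1 := ⟨n - 1, by omega⟩
    have hd0 : d = 0 → (∃ i, c i ≠ 0) → Nat.card {p : (Fin (l+1) → F) × F // ((p.2 + α * (∑ i, p.1 i) ^ 2) ^ q + (p.2 + α * (∑ i, p.1 i) ^ 2)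
      = b * ∑ i, p.1 i ^ (q+1)) ∧ a + ∑ i, c i * p.1 i + d * p.2 = 0} = q ^ (2 * (l+1) - 1) := by
      intro h0 hci
      simp only [h0, zero_mul, add_zero]
      rw [aff_count hm hq2 hF α b hb (fun z => a + ∑ i, c i * z i = 0), hyp_count hq0 hF a c hci,
        show 2 * (l+1) - 1 = 2 * l + 1 by omega]
      ring
    by_cases hvan : ∀ w ∈ W2 F (l+1), f w = 0
    · have h1 : W2 F (l+1) ⊓ LinearMap.ker f = W2 F (l+1) := by
        rw [inf_eq_left]; intro w hw; exact hvan w hw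
      rw [h1, hW, ← pow_mul]
      have hd' : d = 0 := by
        apply hvan; rw [mem_W2]; constructor
        · rw [Pi.single_eq_of_ne]; exact (Fin.last_pos).ne
        · refine Finset.sum_eq_zero fun i _ => ?_
          rw [Pi.single_eq_of_ne]
          rw [← Fin.succ_last]
          intro h; exact (Fin.castSucc_lt_last i).ne (Fin.succ_injective _ h)
      by_cases hci : ∃ i, c i ≠ 0
      · rw [hd0 hd' hci]; simp
      · push Not at hci
        have ha0 : a ≠ 0 := by
          intro h; apply hf; ext v
          simp only [LinearMap.coe_comp, Function.comp, LinearMap.coe_single, LinearMap.zero_apply]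
          refine Fin.cases ?_ (fun j => ?_) v
          · exact h
          · refine Fin.lastCases ?_ (fun k => ?_) j
            · exact hd'
            · exact hci k
        left
        have : IsEmpty {p : (Fin (l+1) → F) × F // ((p.2 + α * (∑ i, p.1 i) ^ 2) ^ q + (p.2 + α * (∑ i, p.1 i) ^ 2)
          = b * ∑ i, p.1 i ^ (q+1)) ∧ a + ∑ i, c i * p.1 i + d * p.2 = 0} := by
          refine ⟨fun p => ha0 ?_⟩
          simpa [hci, hd'] using p.2.2
        rw [Nat.card_of_isEmpty, zero_add]
    · push Not at hvan
      obtain ⟨w, hw, hfw⟩ := hvan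
      have h1 := card_inf_ker (W2 F (l+1)) f w hw hfw
      rw [hW, hF', pow_succ (q ^ 2) l] at h1
      have h1' := Nat.eq_of_mul_eq_mul_right (pow_pos hq0 2) h1
      rw [h1', ← pow_mul]
      simp only [Nat.add_sub_cancel]
      by_cases hd' : d = 0
      · rw [hd0 hd' ?_]
        · simp
        · by_contra hci
          push Not at hci
          apply hfw
          rw [f_vec f, ← hd, hd', ((mem_W2 _).1 hw).1]
          simp only [mul_zero, zero_mul, zero_add, add_zero]
          exact Finset.sum_eq_zero fun i _ => by
            have := hci i
            simp only [hc] at this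
            rw [this, zero_mul]
      · have e : {p : (Fin (l+1) → F) × F // ((p.2 + α * (∑ i, p.1 i) ^ 2) ^ q + (p.2 + α * (∑ i, p.1 i) ^ 2)
          = b * ∑ i, p.1 i ^ (q+1)) ∧ a + ∑ i, c i * p.1 i + d * p.2 = 0} ≃
          {z : Fin (l+1) → F // (-a/d + ∑ i, (-c i/d) * z i + α * (∑ i, z i) ^ 2) ^ q + 
           (-a/d + ∑ i, (-c i/d) * z i + α * (∑ i, z i) ^ 2) = b * ∑ i, z i ^ (q+1)} := by
          have hs : ∀ z : Fin (l+1) → F, -a/d + ∑ i, (-c i/d) * z i = -(a + ∑ i, c i * z i)/d := by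
            intro z
            rw [neg_add, add_div, ← Finset.sum_neg_distrib, Finset.sum_div]
            congr 1
            refine Finset.sum_congr rfl fun i _ => ?_
            ring
          have hy : ∀ (z : Fin (l+1) → F) y, a + ∑ i, c i * z i + d * y = 0 → y = -a/d + ∑ i, (-c i/d) * z i := by
            intro z y h
            rw [hs, eq_div_iff hd']; linear_combination h
          exact 
          { toFun := fun p => ⟨p.1.1, by rw [← hy _ _ p.2.2]; exact p.2.1⟩
            invFun := fun z => ⟨(z.1, -a/d + ∑ i, (-c i/d) * z.1 i), z.2, by
              simp only [hs]; field_simp; ring⟩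
            left_inv := by
              rintro ⟨⟨z, y⟩, h1, h2⟩
              simp only [Subtype.mk.injEq, Prod.mk.injEq, true_and]
              exact (hy z y h2).symm
            right_inv := fun z => rfl }
        rw [Nat.card_congr e]
        rcases quad_count' hm hq2 hF hn α b hα hb hb0 htr (-a/d) (fun i => -c i/d) _ rfl with h | h
        · rw [h]; simp
        · rw [h]; simp

/-- size and hyperplane intersection numbers of `B` for `q = 2^m > 2`
even and `r ≥ 4` even, with `Tr_{GF(q)/GF(2)}(α^{q+1}/(β^q+β)²) = 0`, where the
absolute trace of `x ∈ GF(q)` is `∑_{i<m} x^{2^i}`. -/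
theorem statement5 (q r m : ℕ) (hm : q = 2 ^ m) (hq2 : 2 < q)
    (hr : 4 ≤ r) (hreven : Even r)
    (F : Type) [Field F] [Fintype F] (hF : Fintype.card F = q ^ 2)
    (α β : F) (hα : α ≠ 0) (hβ : β ^ q ≠ β)
    (htr : ∑ i ∈ Finset.range m, (α ^ (q + 1) / (β ^ q + β) ^ 2) ^ 2 ^ i = 0) :
    Nat.card ↥(Bset F q r α β) = q ^ (2 * r - 1) + ∑ i ∈ Finset.range (r - 1), q ^ (2 * i) ∧
    ∀ f : Module.Dual F (Fin (r + 1) → F), f ≠ 0 →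
      Nat.card ↥(Bset F q r α β ∩ {P | f P.rep = 0}) ∈
        ({(q ^ (2 * (r - 1)) - 1) / (q ^ 2 - 1),
          q ^ (2 * r - 3) - q ^ (r - 1) + q ^ (r - 2) + (q ^ (2 * (r - 2)) - 1) / (q ^ 2 - 1),
          q ^ (2 * r - 3) + (q ^ (2 * (r - 2)) - 1) / (q ^ 2 - 1),
          q ^ (2 * r - 3) + q ^ (r - 2) + (q ^ (2 * (r - 2)) - 1) / (q ^ 2 - 1),
          q ^ (2 * r - 3) + (q ^ (2 * (r - 1)) - 1) / (q ^ 2 - 1)} : Set ℕ) := by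
  obtain ⟨n, rfl⟩ : ∃ n, r = n + 1 := ⟨r - 1, by omega⟩
  have hn : Odd n := by
    obtain ⟨k, hk⟩ := hreven
    exact ⟨k - 1, by omega⟩
  have h := main_aux q n m hm hq2 hn (by omega) F hF α β hα hβ htr
  rw [show 2 * (n + 1) - 1 = 2 * n + 1 by omega, show n + 1 - 1 = n by omega,
    show 2 * (n + 1) - 3 = 2 * n - 1 by omega, show n + 1 - 2 = n - 1 by omega]
  exact h
end

section
/- Let q be an odd prime power, r > 3, and let B be the hypersurface of PG(r,q²) defined below (with the stated conditions on α and β). Then B spans PG(r,q²) (so the projective code C(B) has dimension r+1) and C(B) is a minimal code; its length is N = q^{2r−1}+q^{r−1}+(q^{2(r−1)}−q²)/(q²−1)+1 if r is odd and N = q^{2r−1}+(q^{2(r−1)}−q²)/(q²−1)+1 if r is even. -/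
/-- The codeword of the projective code associated to the projective system `V`
corresponding to the linear functional `f`. -/
noncomputable def cw {F W : Type*} [Field F] [AddCommGroup W] [Module F W]
    (V : Set (Projectivization F W)) (f : Module.Dual F W) : ↥V → F :=
  fun P => f P.1.rep

/-- A nonzero codeword is minimal if every nonzero codeword whose support is contained
in its support is a scalar multiple of it. -/
def IsMinimalWord {F W : Type*} [Field F] [AddCommGroup W] [Module F W]
    (V : Set (Projectivization F W)) (f : Module.Dual F W) : Prop :=
  cw V f ≠ 0 ∧ ∀ g : Module.Dual F W, cw V g ≠ 0 →
    (∀ P : ↥V, cw V g P ≠ 0 → cw V f P ≠ 0) → ∃ a : F, cw V g = a • cw V f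

/-- The projective code of `V` is a minimal code if all of its nonzero codewords
are minimal. -/
def IsMinimalCode {F W : Type*} [Field F] [AddCommGroup W] [Module F W]
    (V : Set (Projectivization F W)) : Prop :=
  ∀ f : Module.Dual F W, cw V f ≠ 0 → IsMinimalWord V f

set_option linter.unusedSectionVars false
namespace S7

/-- vector with coordinates `(a, x, b)` -/
def V {F : Type*} {n : ℕ} (a : F) (x : Fin n → F) (b : F) : Fin (n + 2) → F :=
  Fin.cons a (Fin.snoc (α := fun _ => F) x b)

section
variable {F : Type} [Field F] {n : ℕ}

lemma V_surj (v : Fin (n + 2) → F) : ∃ a x b, v = V a x b := by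
  refine ⟨v 0, fun j => v j.castSucc.succ, v (Fin.last _), ?_⟩
  ext i
  refine Fin.cases ?_ (fun i => ?_) i
  · simp [V]
  · refine Fin.lastCases ?_ (fun i => ?_) i
    · simp [V]
    · simp [V]

@[simp] lemma V_zero (a : F) (x : Fin n → F) (b : F) : V a x b 0 = a := by simp [V]
@[simp] lemma V_last (a : F) (x : Fin n → F) (b : F) : V a x b (Fin.last (n+1)) = b := by
  rw [← Fin.succ_last]; simp [V]
@[simp] lemma V_mid (a : F) (x : Fin n → F) (b : F) (j : Fin n) :
    V a x b j.castSucc.succ = x j := by simp [V]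

lemma V_inj {a a' : F} {x x' : Fin n → F} {b b' : F} (h : V a x b = V a' x' b') :
    a = a' ∧ x = x' ∧ b = b' := by
  refine ⟨by simpa using congrFun h 0, ?_, by simpa using congrFun h (Fin.last _)⟩
  ext j
  simpa using congrFun h j.castSucc.succ

lemma V_smul (c a : F) (x : Fin n → F) (b : F) : c • V a x b = V (c * a) (c • x) (c * b) := by
  ext i
  refine Fin.cases ?_ (fun i => ?_) i
  · simp
  · refine Fin.lastCases ?_ (fun i => ?_) i
    · simp
    · simp

lemma V_eq_zero : V (0:F) (0 : Fin n → F) 0 = 0 := by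
  have := V_smul (0:F) 0 (0 : Fin n → F) 0
  simpa using this.symm

lemma midsum (h : Fin (n + 2) → F) :
    (∑ i : Fin (n + 1 + 1), if 1 ≤ i.1 ∧ i.1 < n + 1 then h i else 0)
      = ∑ j : Fin n, h j.castSucc.succ := by
  rw [Fin.sum_univ_succ, Fin.sum_univ_castSucc]
  simp

/-- affine equation in coordinates -/
def E (q : ℕ) (α β : F) (x : Fin n → F) (b : F) : Prop :=
  b ^ q - b + α ^ q * (∑ j, x j ^ (2 * q)) - α * (∑ j, x j ^ 2)
    = (β ^ q - β) * ∑ j, x j ^ (q + 1)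

lemma affEq_iff (q : ℕ) (α β : F) (v : Fin (n + 2) → F) :
    affEq q (n + 1) α β v ↔ E q α β (fun j => v j.castSucc.succ) (v (Fin.last _)) := by
  unfold affEq E
  rw [midsum, midsum, midsum]

/-- membership of vectors -/
def P (q : ℕ) (α β : F) (v : Fin (n + 2) → F) : Prop :=
  (v 0 ≠ 0 ∧ affEq q (n+1) α β fun i => v i / v 0) ∨
  (v 0 = 0 ∧ (∑ i : Fin (n + 1 + 1), if 1 ≤ i.1 ∧ i.1 < n + 1 then v i ^ 2 else 0) = 0)

lemma P_one (q : ℕ) (α β : F) (x : Fin n → F) (b : F) :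
    P q α β (V 1 x b) ↔ E q α β x b := by
  unfold P; rw [affEq_iff]; simp

lemma P_zero (q : ℕ) (α β : F) (x : Fin n → F) (b : F) :
    P q α β (V 0 x b) ↔ ∑ j, x j ^ 2 = 0 := by
  unfold P; rw [midsum (fun i => V 0 x b i ^ 2)]; simp

lemma P_smul (q : ℕ) (α β : F) (v : Fin (n + 2) → F) (c : F) (hc : c ≠ 0) :
    P q α β (c • v) ↔ P q α β v := by
  unfold P
  rw [midsum (fun i => v i ^ 2), midsum (fun i => (c • v) i ^ 2)]
  have : (fun i => (c • v) i / (c • v) 0) = fun i => v i / v 0 := by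
    ext i; simp [mul_div_mul_left _ _ hc]
  rw [this]
  simp [hc, mul_pow, ← Finset.mul_sum]

lemma mem_B (q : ℕ) (α β : F) (v : Fin (n + 2) → F) (hv : v ≠ 0) :
    Projectivization.mk F v hv ∈ Bset F q (n+1) α β ↔ P q α β v := by
  obtain ⟨a, ha⟩ := Projectivization.exists_smul_eq_mk_rep F v hv
  change P q α β (Projectivization.mk F v hv).rep ↔ _
  rw [← ha]
  exact P_smul q α β v a a.ne_zero

lemma cw_zero_iff (B : Set (Projectivization F (Fin (n+2) → F))) (f : Module.Dual F (Fin (n+2) → F))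
    (v : Fin (n + 2) → F) (hv : v ≠ 0) (h : Projectivization.mk F v hv ∈ B) :
    cw B f ⟨_, h⟩ = 0 ↔ f v = 0 := by
  obtain ⟨a, ha⟩ := Projectivization.exists_smul_eq_mk_rep F v hv
  unfold cw
  simp only
  rw [← ha, Units.smul_def, map_smul]
  simp

lemma dual_form (f : Module.Dual F (Fin (n+2) → F)) : ∃ (f0 : F) (fx : Fin n → F) (fr : F),
    ∀ a x b, f (V a x b) = f0 * a + ∑ j, fx j * x j + fr * b := by
  refine ⟨f (Pi.single 0 1), fun j => f (Pi.single j.castSucc.succ 1),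
    f (Pi.single (Fin.last _) 1), fun a x b => ?_⟩
  rw [LinearMap.pi_apply_eq_sum_univ f, Fin.sum_univ_succ, Fin.sum_univ_castSucc]
  have : ∀ k : Fin (n+2), (fun j => if k = j then (1:F) else 0) = Pi.single k 1 := by
    intro k; ext j; simp [Pi.single_apply, eq_comm]
  simp only [this, smul_eq_mul, V_zero, V_mid, Fin.succ_last, V_last]
  simp only [mul_comm, add_assoc]

lemma card_smul [Fintype F] (q : ℕ) (α β : F) :
    Nat.card {v : Fin (n + 2) → F // v ≠ 0 ∧ P q α β v}
      = Nat.card (Bset F q (n+1) α β) * Nat.card Fˣ := by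
  rw [← Nat.card_prod]
  symm
  refine Nat.card_congr (Equiv.ofBijective
    (fun p => ⟨(p.2 : F) • p.1.1.rep, ?_, ?_⟩) ⟨?_, ?_⟩)
  · exact smul_ne_zero p.2.ne_zero p.1.1.rep_nonzero
  · rw [P_smul _ _ _ _ _ p.2.ne_zero]; exact p.1.2
  · rintro ⟨⟨A, hA⟩, u⟩ ⟨⟨A', hA'⟩, u'⟩ h
    simp only [Subtype.mk.injEq] at h
    have h1 : A = A' := by
      rw [← A.mk_rep, ← A'.mk_rep, Projectivization.mk_eq_mk_iff]
      refine ⟨u⁻¹ * u', ?_⟩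
      rw [mul_smul, inv_smul_eq_iff]
      exact h.symm
    subst h1
    have := smul_left_injective F A.rep_nonzero h
    simp [Units.ext this]
  · rintro ⟨v, hv, hP⟩
    obtain ⟨a, ha⟩ := Projectivization.exists_smul_eq_mk_rep F v hv
    refine ⟨⟨⟨Projectivization.mk F v hv, (mem_B _ _ _ _ _).2 hP⟩, a⁻¹⟩, ?_⟩
    simp only [Subtype.mk.injEq]
    rw [← ha, ← Units.smul_def, inv_smul_smul]

lemma card_split [Fintype F] (q : ℕ) (α β : F) :
    Nat.card {v : Fin (n + 2) → F // v ≠ 0 ∧ P q α β v}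
      = Nat.card Fˣ * Nat.card {p : (Fin n → F) × F // E q α β p.1 p.2}
        + Nat.card {p : (Fin n → F) × F // p ≠ 0 ∧ ∑ j, p.1 j ^ 2 = 0} := by
  rw [← Nat.card_prod, ← Nat.card_sum]
  symm
  refine Nat.card_congr (Equiv.ofBijective
    (Sum.elim (fun p => ⟨(p.1 : F) • V 1 p.2.1.1 p.2.1.2, ?_, ?_⟩)
      (fun p => ⟨V 0 p.1.1 p.1.2, ?_, ?_⟩)) ⟨?_, ?_⟩)
  · refine smul_ne_zero p.1.ne_zero (fun h => ?_)
    simpa using congrFun h 0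
  · rw [P_smul _ _ _ _ _ p.1.ne_zero, P_one]; exact p.2.2
  · intro h
    rw [← V_eq_zero] at h
    obtain ⟨-, h1, h2⟩ := V_inj h
    exact p.2.1 (Prod.ext h1 h2)
  · rw [P_zero]; exact p.2.2
  · rintro (⟨u, ⟨⟨x, b⟩, h⟩⟩ | ⟨⟨x, b⟩, h⟩) (⟨u', ⟨⟨x', b'⟩, h'⟩⟩ | ⟨⟨x', b'⟩, h'⟩) heq
    · simp only [Sum.elim_inl, Subtype.mk.injEq, V_smul] at heq
      obtain ⟨h1, h2, h3⟩ := V_inj heq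
      simp only [mul_one] at h1
      have h1' := Units.ext h1
      subst h1'
      have h2' := smul_right_injective (Fin n → F) u.ne_zero h2
      have h3' := mul_left_cancel₀ u.ne_zero h3
      change x = x' at h2'
      subst h2' h3'
      rfl
    · simp only [Sum.elim_inl, Sum.elim_inr, Subtype.mk.injEq, V_smul] at heq
      obtain ⟨h1, h2, h3⟩ := V_inj heq
      simp at h1
    · simp only [Sum.elim_inl, Sum.elim_inr, Subtype.mk.injEq, V_smul] at heq
      obtain ⟨h1, h2, h3⟩ := V_inj heq
      exact absurd (by simpa using h1.symm) u'.ne_zero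
    · simp only [Sum.elim_inr, Subtype.mk.injEq] at heq
      obtain ⟨h1, h2, h3⟩ := V_inj heq
      subst h2 h3
      rfl
  · rintro ⟨v, hv, hP⟩
    obtain ⟨a, x, b, rfl⟩ := V_surj v
    by_cases ha : a = 0
    · subst ha
      refine ⟨Sum.inr ⟨⟨x, b⟩, ?_, (P_zero _ _ _ _ _).1 hP⟩, rfl⟩
      intro h
      simp only [Prod.mk_eq_zero] at h
      rw [h.1, h.2] at hv
      exact hv V_eq_zero
    · have hh : V a x b = a • V 1 (a⁻¹ • x) (a⁻¹ * b) := by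
        rw [V_smul]; simp [ha]
      refine ⟨Sum.inl ⟨Units.mk0 a ha, ⟨⟨a⁻¹ • x, a⁻¹ * b⟩, ?_⟩⟩, ?_⟩
      · rw [hh, P_smul _ _ _ _ _ ha, P_one] at hP
        exact hP
      · simp [← hh]

end

section
variable {F : Type} [Field F] [Fintype F]

open Classical in
lemma card_hyperbola (c : F) : Nat.card {p : F × F // p.1 * p.2 = c} + 1
    = Fintype.card F + if c = 0 then Fintype.card F else 0 := by
  classical
  rw [Nat.card_congr (Equiv.subtypeProdEquivSigmaSubtype (fun u v : F => u * v = c)),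
    Nat.card_sigma]
  have : ∀ u : F, Nat.card {v : F // u * v = c}
      = (if u = 0 then (if c = 0 then Fintype.card F else 0) else 1) := by
    intro u
    by_cases hu : u = 0
    · by_cases hc : c = 0
      · simp [hu, hc]
      · simp [hu, hc, Ne.symm hc]
    · rw [if_neg hu, Nat.card_eq_one_iff_unique]
      refine ⟨⟨fun a b => Subtype.ext (mul_left_cancel₀ hu (a.2.trans b.2.symm))⟩,
        ⟨⟨u⁻¹ * c, by field_simp⟩⟩⟩
  rw [Finset.sum_congr rfl fun u _ => this u,
    ← Finset.add_sum_erase _ _ (Finset.mem_univ (0:F)), if_pos rfl,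
    Finset.sum_congr rfl (g := fun _ => 1) (fun u hu => if_neg (Finset.ne_of_mem_erase hu))]
  simp only [Finset.sum_const, smul_eq_mul, mul_one, Finset.card_erase_of_mem (Finset.mem_univ _),
    Finset.card_univ]
  have := Fintype.card_pos (α := F)
  omega

/-- number of zeros of the sum of squares -/
noncomputable def N (F : Type) [Field F] (n : ℕ) : ℕ :=
  Nat.card {x : Fin n → F // ∑ j, x j ^ 2 = 0}

lemma N_rec (i : F) (hi : i * i = -1) (h2 : (2:F) ≠ 0) (n : ℕ) :
    N F (n + 2) + Fintype.card F ^ n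
      = Fintype.card F ^ (n + 1) + Fintype.card F * N F n := by
  classical
  have hi0 : i ≠ 0 := by rintro rfl; simp at hi
  have e : {x : Fin (n+2) → F // ∑ j, x j ^ 2 = 0} ≃
      Σ w : Fin n → F, {p : F × F // p.1 * p.2 = - ∑ j, w j ^ 2} := by
    refine Equiv.symm (Equiv.ofBijective (fun p => ⟨Fin.cons ((p.2.1.1 + p.2.1.2) / 2)
      (Fin.cons ((p.2.1.1 - p.2.1.2) / (2 * i)) p.1 : Fin (n+1) → F), ?_⟩) ⟨?_, ?_⟩)
    · obtain ⟨w, ⟨⟨u, v⟩, h⟩⟩ := p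
      rw [Fin.sum_univ_succ, Fin.sum_univ_succ]
      simp only [Fin.cons_zero, Fin.cons_succ]
      simp only at h
      have h3 : ∑ j, w j ^ 2 = - (u * v) := by rw [h]; simp
      rw [h3, div_pow, div_pow, mul_pow, pow_two i, hi]
      field_simp
      ring
    · rintro ⟨w, ⟨⟨u, v⟩, h⟩⟩ ⟨w', ⟨⟨u', v'⟩, h'⟩⟩ heq
      simp only [Subtype.mk.injEq] at heq
      rw [Fin.cons_inj, Fin.cons_inj] at heq
      obtain ⟨h1, h2', rfl⟩ := heq
      field_simp at h1 h2'
      have hu : u = u' := by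
        apply mul_left_cancel₀ h2; linear_combination h1 + h2'
      subst hu
      have hv : v = v' := by linear_combination h1
      subst hv
      rfl
    · rintro ⟨x, hx⟩
      rw [Fin.sum_univ_succ, Fin.sum_univ_succ] at hx
      refine ⟨⟨fun j => x j.succ.succ, ⟨⟨x 0 + i * x 1, x 0 - i * x 1⟩, ?_⟩⟩, ?_⟩
      · simp only [Fin.succ_zero_eq_one] at hx
        linear_combination hx - x 1 ^ 2 * hi
      · apply Subtype.ext
        ext j
        refine Fin.cases ?_ (fun j => ?_) j
        · simp; field_simp; ring
        · refine Fin.cases ?_ (fun j => ?_) j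
          · simp; field_simp; ring
          · simp
  have hs : ∑ w : Fin n → F, (Nat.card {p : F × F // p.1 * p.2 = - ∑ j, w j ^ 2} + 1)
      = ∑ w : Fin n → F, (Fintype.card F + if ∑ j, w j ^ 2 = 0 then Fintype.card F else 0) := by
    refine Finset.sum_congr rfl fun w _ => ?_
    rw [card_hyperbola]; simp only [neg_eq_zero]
  rw [Finset.sum_add_distrib, Finset.sum_add_distrib, ← Finset.sum_filter] at hs
  simp only [Finset.sum_const, smul_eq_mul, mul_one, Finset.card_univ, Fintype.card_fun,
    Fintype.card_fin] at hs
  unfold N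
  rw [Nat.card_congr e, Nat.card_sigma, hs, Nat.card_eq_fintype_card, Fintype.card_subtype]
  ring

lemma N_odd (i : F) (hi : i * i = -1) (h2 : (2:F) ≠ 0) (k : ℕ) :
    N F (2 * k + 1) = Fintype.card F ^ (2 * k) := by
  induction k with
  | zero =>
    simp only [N]
    rw [Nat.card_eq_one_iff_unique.2]
    · simp
    refine ⟨⟨fun a b => ?_⟩, ⟨⟨0, by simp⟩⟩⟩
    apply Subtype.ext
    have ha := a.2
    have hb := b.2
    simp at ha hb
    ext j
    have hj : j = 0 := by apply Fin.ext; simp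
    rw [hj, ha, hb]
  | succ k ih =>
    have := N_rec i hi h2 (2 * k + 1)
    rw [ih] at this
    rw [show 2 * (k + 1) + 1 = 2 * k + 1 + 2 by ring]
    ring_nf at this ⊢
    omega

lemma N_even (i : F) (hi : i * i = -1) (h2 : (2:F) ≠ 0) (k : ℕ) :
    Fintype.card F * N F (2 * k) + Fintype.card F ^ k
      = Fintype.card F ^ (2 * k) + Fintype.card F ^ (k + 1) := by
  induction k with
  | zero => simp [N]; ring
  | succ k ih =>
    have := N_rec i hi h2 (2 * k)
    rw [show 2 * (k + 1) = 2 * k + 2 by ring]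
    zify at this ih ⊢
    linear_combination (Fintype.card F : ℤ) * this + (Fintype.card F : ℤ) * ih

lemma card_inf (n : ℕ) :
    Nat.card {p : (Fin n → F) × F // p ≠ 0 ∧ ∑ j, p.1 j ^ 2 = 0} + 1 = N F n * Fintype.card F := by
  classical
  have e : {x : Fin n → F // ∑ j, x j ^ 2 = 0} × F ≃
      {p : (Fin n → F) × F // ∑ j, p.1 j ^ 2 = 0} :=
    { toFun := fun p => ⟨(p.1.1, p.2), p.1.2⟩
      invFun := fun p => ⟨⟨p.1.1, p.2⟩, p.1.2⟩
      left_inv := fun _ => rfl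
      right_inv := fun _ => rfl }
  rw [N, ← Nat.card_eq_fintype_card (α := F), ← Nat.card_prod, Nat.card_congr e,
    Nat.card_eq_fintype_card, Nat.card_eq_fintype_card, Fintype.card_subtype,
    Fintype.card_subtype]
  have h0 : (0 : (Fin n → F) × F) ∈ Finset.univ.filter
    (fun p : (Fin n → F) × F => ∑ j, p.1 j ^ 2 = 0) := by simp
  rw [← Finset.card_erase_add_one h0]
  congr 2
  ext p
  simp
end
section
variable {F : Type} [Field F] [Fintype F]

lemma frob (q : ℕ) (hq : IsPrimePow q) (hF : Fintype.card F = q ^ 2) :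
    ∃ σ : F →+* F, (∀ x, σ x = x ^ q) ∧ ∀ x, σ (σ x) = x := by
  obtain ⟨p, k, hp, hk, rfl⟩ := hq
  have hp' : Nat.Prime p := hp.nat_prime
  have : Fact p.Prime := ⟨hp'⟩
  obtain ⟨p', hc⟩ := CharP.exists F
  have := hc
  obtain ⟨m, hp1, hm⟩ := FiniteField.card F p'
  have hpp : p' = p := by
    rw [hF, ← pow_mul] at hm
    have : p' ∣ p ^ (k * 2) := by
      rw [hm]; exact dvd_pow_self _ m.ne_zero
    exact (Nat.prime_dvd_prime_iff_eq hp1 hp').1 (hp1.dvd_of_dvd_pow this)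
  subst hpp
  refine ⟨iterateFrobenius F p' k, fun x => rfl, fun x => ?_⟩
  rw [iterateFrobenius_def, iterateFrobenius_def, ← pow_mul, ← pow_two, ← hF, FiniteField.pow_card]

open Classical Polynomial in
lemma card_poly_le (q : ℕ) (hq : 2 ≤ q) (e d : F) :
    (Finset.univ.filter (fun x : F => x ^ q + e * x + d = 0)).card ≤ q := by
  let p : F[X] := X ^ q + (C e * X + C d)
  have hdeg : p.natDegree = q := by
    have h1 : (C e * X + C d : F[X]).degree < (q : ℕ) := by
      refine lt_of_le_of_lt degree_linear_le ?_
      exact_mod_cast hq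
    exact natDegree_eq_of_degree_eq_some ((degree_add_eq_left_of_degree_lt (by rwa [degree_X_pow])).trans (degree_X_pow q))
  have hp0 : p ≠ 0 := by
    intro h; rw [h] at hdeg; simp at hdeg; omega
  calc _ ≤ p.roots.toFinset.card := by
        apply Finset.card_le_card
        intro x hx
        simp only [Finset.mem_filter, Finset.mem_univ, true_and] at hx
        rw [Multiset.mem_toFinset, mem_roots hp0]
        simp [p, IsRoot, ← hx, add_assoc]
    _ ≤ Multiset.card p.roots := Multiset.toFinset_card_le _
    _ ≤ q := hdeg ▸ card_roots' p

lemma q_ge (q : ℕ) (hq : IsPrimePow q) (hqodd : Odd q) : 3 ≤ q := by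
  have := hq.two_le
  obtain ⟨k, rfl⟩ := hqodd
  omega


open Classical in
lemma skew_le (q : ℕ) (hq : 3 ≤ q) (σ : F →+* F) (hσ : ∀ x, σ x = x ^ q) : (Finset.univ.filter (fun x : F => σ x = -x)).card ≤ q := by
  refine le_trans (Finset.card_le_card ?_) (card_poly_le q (by omega) (1:F) 0)
  intro x
  simp only [Finset.mem_filter, Finset.mem_univ, true_and, hσ]
  intro h; rw [h]; ring

open Classical in
lemma fiber_card (q : ℕ) (hq : 3 ≤ q) (hF : Fintype.card F = q ^ 2) (σ : F →+* F)
    (hσ : ∀ x, σ x = x ^ q) (hσσ : ∀ x, σ (σ x) = x) (c : F) (hc : σ c = - c) : Nat.card {b : F // σ b - b = c} = q := by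
  have hfib : ∀ c : F, (Finset.univ.filter (fun b : F => σ b - b = c)).card ≤ q := by
    intro c
    refine le_trans (Finset.card_le_card ?_) (card_poly_le q (by omega) (-1:F) (-c))
    intro x
    simp only [Finset.mem_filter, Finset.mem_univ, true_and, hσ]
    intro h; rw [← h]; ring
  rw [Nat.card_eq_fintype_card, Fintype.card_subtype]
  by_contra hne
  have hlt := lt_of_le_of_ne (hfib c) hne
  have hsum := Finset.card_eq_sum_card_fiberwise (s := (Finset.univ : Finset F))
    (t := Finset.univ.filter (fun x : F => σ x = -x)) (f := fun b => σ b - b)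
    (by intro b _; simp [hσσ])
  rw [Finset.card_univ, hF] at hsum
  have : ∑ c ∈ Finset.univ.filter (fun x : F => σ x = -x),
      (Finset.univ.filter (fun b : F => σ b - b = c)).card <
      ∑ c ∈ Finset.univ.filter (fun x : F => σ x = -x), q :=
    Finset.sum_lt_sum (fun c _ => hfib c) ⟨c, by simp [hc], hlt⟩
  rw [← hsum, Finset.sum_const, smul_eq_mul] at this
  have h2 := Nat.mul_le_mul_right q (skew_le q hq σ hσ)
  nlinarith

/-- right-hand side of the affine equation -/
def rhs {n : ℕ} (σ : F →+* F) (α β : F) (x : Fin n → F) : F :=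
  ∑ j, ((σ β - β) * (x j * σ (x j)) - (σ (α * x j ^ 2) - α * x j ^ 2))

lemma E_iff (q : ℕ) (σ : F →+* F) (hσ : ∀ x, σ x = x ^ q) {n : ℕ} (α β : F) (x : Fin n → F) (b : F) :
    E q α β x b ↔ σ b - b = rhs σ α β x := by
  unfold E rhs
  simp only [Finset.sum_sub_distrib, ← Finset.mul_sum, hσ, mul_pow]
  have h1 : ∑ j, x j ^ (2 * q) = ∑ j, (x j ^ 2) ^ q := by simp only [pow_mul]
  have h2 : ∑ j, x j ^ (q + 1) = ∑ j, x j * x j ^ q := by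
    refine Finset.sum_congr rfl fun j _ => by ring
  rw [h1, h2]
  constructor <;> intro h <;> linear_combination h

lemma rhs_skew (σ : F →+* F) (hσσ : ∀ x, σ (σ x) = x) {n : ℕ} (α β : F) (x : Fin n → F) : σ (rhs σ α β x) = - rhs σ α β x := by
  unfold rhs
  rw [map_sum, ← Finset.sum_neg_distrib]
  refine Finset.sum_congr rfl fun j _ => ?_
  simp only [map_sub, map_mul, map_pow, hσσ]
  ring

lemma card_aff (q : ℕ) (hq : 3 ≤ q) (hF : Fintype.card F = q ^ 2) (σ : F →+* F)
    (hσ : ∀ x, σ x = x ^ q) (hσσ : ∀ x, σ (σ x) = x) (n : ℕ) (α β : F) :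
    Nat.card {p : (Fin n → F) × F // E q α β p.1 p.2} = q ^ (2 * n + 1) := by
  rw [Nat.card_congr (Equiv.subtypeProdEquivSigmaSubtype (fun (x : Fin n → F) b => E q α β x b)),
    Nat.card_sigma]
  have : ∀ x : Fin n → F, Nat.card {b // E q α β x b} = q := by
    intro x
    simp only [E_iff q σ hσ α β x]
    exact fiber_card q hq hF σ hσ hσσ _ (rhs_skew σ hσσ α β x)
  rw [Finset.sum_congr rfl fun x _ => this x, Finset.sum_const, Finset.card_univ, Fintype.card_fun,
    hF, Fintype.card_fin, smul_eq_mul]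
  ring

lemma exists_b (q : ℕ) (hq : 3 ≤ q) (hF : Fintype.card F = q ^ 2) (σ : F →+* F)
    (hσ : ∀ x, σ x = x ^ q) (hσσ : ∀ x, σ (σ x) = x) {n : ℕ} (α β : F) (x : Fin n → F) : ∃ b, E q α β x b := by
  have := fiber_card q hq hF σ hσ hσσ _ (rhs_skew σ hσσ α β x)
  have h : 0 < Nat.card {b : F // σ b - b = rhs σ α β x} := by omega
  obtain ⟨⟨b, hb⟩⟩ := (Nat.card_pos_iff.1 h).1
  exact ⟨b, (E_iff q σ hσ α β x b).2 hb⟩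

open Classical in
lemma card_B (q : ℕ) (hq : 3 ≤ q) (hF : Fintype.card F = q ^ 2) (σ : F →+* F)
    (hσ : ∀ x, σ x = x ^ q) (hσσ : ∀ x, σ (σ x) = x) (hqodd : Odd q) (n : ℕ) (hn : 3 ≤ n) (α β : F) :
    (Odd (n+1) → Nat.card ↥(Bset F q (n+1) α β) =
      q ^ (2 * (n+1) - 1) + q ^ n + (q ^ (2 * n) - q ^ 2) / (q ^ 2 - 1) + 1) ∧
    (Even (n+1) → Nat.card ↥(Bset F q (n+1) α β) =
      q ^ (2 * (n+1) - 1) + (q ^ (2 * n) - q ^ 2) / (q ^ 2 - 1) + 1) := by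
  have hcard4 : Fintype.card F % 4 = 1 := by
    rw [hF]; obtain ⟨k, rfl⟩ := hqodd
    have : (2 * k + 1) ^ 2 = 4 * (k * k + k) + 1 := by ring
    omega
  obtain ⟨i, hi⟩ := (FiniteField.isSquare_neg_one_iff (F := F)).2 (by omega)
  have h2 : (2:F) ≠ 0 := by
    apply Ring.two_ne_zero
    intro h
    have := FiniteField.even_card_of_char_two (F := F) h
    omega
  have hA := (card_smul (n := n) q α β).symm.trans (card_split q α β)
  rw [card_aff q hq hF σ hσ hσσ] at hA
  have hB := card_inf (F := F) n
  have hU : Nat.card Fˣ = q ^ 2 - 1 := by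
    rw [Nat.card_units, Nat.card_eq_fintype_card, hF]
  have hq2 : 1 ≤ q ^ 2 := Nat.one_le_pow _ _ (by omega)
  have hqpos : 0 < q ^ 2 - 1 := by
    have : 9 ≤ q ^ 2 := by nlinarith
    omega
  obtain ⟨m, hm⟩ : ∃ m, q ^ (2 * n) - q ^ 2 = (q ^ 2 - 1) * m := by
    have h := Nat.sub_dvd_pow_sub_pow (q ^ 2) 1 (n - 1)
    rw [one_pow] at h
    obtain ⟨m, hm⟩ := h
    refine ⟨q ^ 2 * m, ?_⟩
    have : q ^ (2 * n) = q ^ 2 * (q ^ 2) ^ (n - 1) := by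
      rw [← pow_succ', ← pow_mul]; congr 1; omega
    rw [this]
    calc _ = q ^ 2 * ((q ^ 2) ^ (n - 1) - 1) := by rw [Nat.mul_sub]; simp
      _ = _ := by rw [hm]; ring
  have hle : q ^ 2 ≤ q ^ (2 * n) := Nat.pow_le_pow_right (by omega) (by omega)
  rw [hm, Nat.mul_div_cancel_left _ hqpos]
  have e1 : 2 * (n + 1) - 1 = 2 * n + 1 := by omega
  rw [e1]
  rw [hU] at hA
  rw [hF] at hB
  generalize Nat.card ↥(Bset F q (n+1) α β) = X at *
  generalize Nat.card {p : (Fin n → F) × F // p ≠ 0 ∧ ∑ j, p.1 j ^ 2 = 0} = Y at *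
  obtain ⟨s, hs⟩ : ∃ s, q ^ 2 = s + 1 := ⟨q ^ 2 - 1, by omega⟩
  have hs' : q ^ 2 - 1 = s := by omega
  rw [hs'] at hA hm hqpos
  have hm' : q ^ (2 * n) = q ^ 2 + s * m := by omega
  constructor
  · intro ho
    obtain ⟨k, hk⟩ : ∃ k, n = 2 * k := by obtain ⟨k, hk⟩ := ho; exact ⟨k, by omega⟩
    have hN := N_even i hi.symm h2 k
    rw [← hk, hF, ← pow_mul, ← pow_mul, ← pow_mul, ← hk] at hN
    have e2 : q ^ (2 * (k + 1)) = q ^ n * q ^ 2 := by rw [← pow_add]; congr 1; omega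
    rw [e2] at hN
    apply Nat.eq_of_mul_eq_mul_left hqpos
    zify at *
    linear_combination hA + hB + hN + hm' + (q ^ n + 1 : ℤ) * hs
  · intro ho
    obtain ⟨k, hk⟩ : ∃ k, n = 2 * k + 1 := by obtain ⟨k, hk⟩ := ho; exact ⟨k - 1, by omega⟩
    have hN := N_odd i hi.symm h2 k
    rw [← hk, hF] at hN
    have e2 : q ^ (2 * n) = (q ^ 2) ^ (2 * k) * q ^ 2 := by
      rw [← pow_succ, ← hk, ← pow_mul]
    apply Nat.eq_of_mul_eq_mul_left hqpos
    rw [← hN] at e2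
    zify at *
    linear_combination hA + hB - e2 + hm' + hs

end
section
variable {F : Type} [Field F] [Fintype F]

/-- one-variable term -/
def tau (σ : F →+* F) (α β m y : F) : F :=
  σ (m * y) - m * y - ((σ β - β) * (y * σ y) - (σ (α * y ^ 2) - α * y ^ 2))

lemma tau_skew (σ : F →+* F) (hσσ : ∀ x, σ (σ x) = x) (α β m y : F) :
    σ (tau σ α β m y) = - tau σ α β m y := by
  unfold tau
  simp only [map_sub, map_mul, map_pow, hσσ]
  ring

lemma tau_zero (σ : F →+* F) (α β m : F) : tau σ α β m 0 = 0 := by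
  simp [tau]

lemma exists_u (σ : F →+* F) (α β : F) (hα : α ≠ 0) (hβ : σ β ≠ β) :
    ∃ u, tau σ α β 0 u ≠ 0 := by
  by_contra! h
  have key : ∀ u, σ u ≠ u → σ (α * u) = - (α * u) := by
    intro u hu
    have h1 := h 1
    have hu' := h u
    simp only [tau, map_mul, map_pow, map_one, map_zero] at h1 hu' ⊢
    have : (σ u - u) * (σ α * σ u + α * u) = 0 := by
      linear_combination hu' - u * σ u * h1
    rcases mul_eq_zero.1 this with h3 | h3
    · exact absurd (sub_eq_zero.1 h3) hu
    · linear_combination h3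
  have h1 := key β hβ
  have h2 := key (β + 1) (by simpa using hβ)
  rw [mul_add, map_add, h1, mul_one] at h2
  have h3 : σ α = - α := by linear_combination h2
  rw [map_mul, h3] at h1
  apply hβ
  apply mul_left_cancel₀ hα
  linear_combination -h1


open Classical in
lemma tau_not_inj (q : ℕ) (hq : 3 ≤ q) (hF : Fintype.card F = q ^ 2) (σ : F →+* F)
    (hσ : ∀ x, σ x = x ^ q) (hσσ : ∀ x, σ (σ x) = x) (α β : F) (m : F) : ∃ y y', y ≠ y' ∧ tau σ α β m y = tau σ α β m y' := by
  obtain ⟨y, -, y', -, h, h'⟩ := Finset.exists_ne_map_eq_of_card_lt_of_maps_to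
    (s := (Finset.univ : Finset F)) (t := Finset.univ.filter (fun x : F => σ x = -x))
    (f := tau σ α β m) (by
      rw [Finset.card_univ, hF]
      refine lt_of_le_of_lt (skew_le q hq σ hσ) ?_
      nlinarith) (by intro y _; simp [tau_skew σ hσσ])
  exact ⟨y, y', h, h'⟩


open Classical Polynomial in
lemma quad (q : ℕ) (hq : 3 ≤ q) (hqodd : Odd q) (hF : Fintype.card F = q ^ 2)
    (σ : F →+* F) (hσ : ∀ x, σ x = x ^ q) (hσσ : ∀ x, σ (σ x) = x) (α β : F) (hα : α ≠ 0) (hβ : σ β ≠ β) (c : F) (hc : σ c = -c) (m1 m2 : F) :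
    ∃ z1 z2, c + tau σ α β m1 z1 + tau σ α β m2 z2 = 0 := by
  obtain ⟨u, hu⟩ := exists_u σ α β hα hβ
  let K : Subfield F := σ.eqLocusField (RingHom.id F)
  have memK : ∀ x, x ∈ K ↔ σ x = x := fun x => Iff.rfl
  have hδ : σ β - β ≠ 0 := sub_ne_zero.2 hβ
  have mem : ∀ x, σ x = -x → x / (σ β - β) ∈ K := by
    intro x hx
    rw [memK, map_div₀, map_sub, hσσ, hx, ← neg_sub (σ β) β, neg_div_neg_eq]
  have hcK : Fintype.card K = q := by
    have := fiber_card q hq hF σ hσ hσσ 0 (by simp)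
    rw [← this, ← Nat.card_eq_fintype_card]
    refine Nat.card_congr (Equiv.subtypeEquivRight fun x => ?_)
    rw [memK, sub_eq_zero]
  have hsk : ∀ m, σ (σ (m * u) - m * u) = -(σ (m * u) - m * u) := by
    intro m; rw [map_sub, hσσ]; ring
  let A : K := ⟨_, mem _ (tau_skew σ hσσ α β 0 u)⟩
  let L1 : K := ⟨_, mem _ (hsk m1)⟩
  let L2 : K := ⟨_, mem _ (hsk m2)⟩
  let C0 : K := ⟨_, mem _ hc⟩
  have hA : A ≠ 0 := by
    intro h
    have : (A : F) = 0 := by rw [h]; rfl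
    exact div_ne_zero hu hδ this
  obtain ⟨s, t, hst⟩ := FiniteField.exists_root_sum_quadratic
    (f := C A * X ^ 2 + C L1 * X + C C0) (g := C A * X ^ 2 + C L2 * X + C 0)
    (degree_quadratic hA) (degree_quadratic hA) (by rw [hcK]; exact Nat.odd_iff.1 hqodd)
  refine ⟨s * u, t * u, ?_⟩
  have hst' : ((A : F) * s ^ 2 + L1 * s + C0) + (A * t ^ 2 + L2 * t + 0) = 0 := by
    simp only [eval_add, eval_mul, eval_C, eval_pow, eval_X] at hst
    exact_mod_cast congrArg (Subtype.val) hst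
  have hs : σ s = s := s.2
  have ht : σ t = t := t.2
  have expand : ∀ m x : F, σ x = x → tau σ α β m (x * u) =
      tau σ α β 0 u * x ^ 2 + (σ (m * u) - m * u) * x := by
    intro m x hx
    simp only [tau, map_mul, map_pow, hx, map_zero]
    ring
  rw [expand _ _ hs, expand _ _ ht]
  simp only [A, L1, L2, C0] at hst'
  rw [mul_comm m2 u]
  rw [mul_comm m2 u] at hst'
  field_simp at hst'
  linear_combination hst'

open Classical in
lemma core (q : ℕ) (hq : 3 ≤ q) (hqodd : Odd q) (hF : Fintype.card F = q ^ 2)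
    (σ : F →+* F) (hσ : ∀ x, σ x = x ^ q) (hσσ : ∀ x, σ (σ x) = x) (α β : F) (hα : α ≠ 0) (hβ : σ β ≠ β) {n : ℕ} (hn : 3 ≤ n) (f0 g0 fr gr : F) (fx gx : Fin n → F)
    (H1 : ∀ x b, E q α β x b → f0 + ∑ j, fx j * x j + fr * b = 0 →
      g0 + ∑ j, gx j * x j + gr * b = 0)
    (H2 : ∀ (x : Fin n → F) b, ∑ j, x j ^ 2 = 0 → ∑ j, fx j * x j + fr * b = 0 →
      ∑ j, gx j * x j + gr * b = 0)
    (hf : ¬ (f0 = 0 ∧ fx = 0 ∧ fr = 0)) :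
    ∃ a, g0 = a * f0 ∧ (∀ j, gx j = a * fx j) ∧ gr = a * fr := by
  have hcard4 : Fintype.card F % 4 = 1 := by
    rw [hF]; obtain ⟨k, rfl⟩ := hqodd
    have : (2 * k + 1) ^ 2 = 4 * (k * k + k) + 1 := by ring
    omega
  obtain ⟨i, hi⟩ := (FiniteField.isSquare_neg_one_iff (F := F)).2 (by omega)
  have h2 : (2:F) ≠ 0 := by
    apply Ring.two_ne_zero
    intro h
    have := FiniteField.even_card_of_char_two (F := F) h
    omega
  have hi0 : i ≠ 0 := by rintro rfl; simp at hi
  have two : ∀ (j k : Fin n), j ≠ k → ∀ (h : Fin n → F → F), (∀ l, h l 0 = 0) → ∀ y z,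
      ∑ l, h l ((if l = j then y else if l = k then z else 0)) = h j y + h k z := by
    intro j k hjk h h0 y z
    rw [← Finset.sum_subset (Finset.subset_univ {j, k}), Finset.sum_pair hjk]
    · simp [hjk.symm]
    · intro l _ hl
      simp only [Finset.mem_insert, Finset.mem_singleton, not_or] at hl
      simp [hl.1, hl.2, h0]
  have other : ∀ j : Fin n, ∃ k, j ≠ k := by
    intro j
    have : Nontrivial (Fin n) := Fin.nontrivial_iff_two_le.2 (by omega)
    obtain ⟨k, hk⟩ := exists_ne j
    exact ⟨k, hk.symm⟩
  by_cases hfr : fr = 0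
  · subst hfr
    have hgr : gr = 0 := by simpa using H2 0 1 (by simp) (by simp)
    subst hgr
    simp only [zero_mul, add_zero] at H1 H2
    by_cases hfx : fx = 0
    · subst hfx
      have hf0 : f0 ≠ 0 := by
        intro h; exact hf ⟨h, rfl, rfl⟩
      refine ⟨g0 / f0, by field_simp, fun j => ?_, by simp⟩
      obtain ⟨k, hjk⟩ := other j
      have key : ∀ z, z * z = -1 → gx j * 1 + gx k * z = 0 := by
        intro z hz
        rw [← two j k hjk (fun l y => gx l * y) (by simp)]
        refine H2 _ 0 ?_ (by simp)
        rw [two j k hjk (fun _ y => y ^ 2) (by simp)]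
        linear_combination hz
      have k1 := key i hi.symm
      have k2 := key (-i) (by rw [neg_mul_neg]; exact hi.symm)
      simp only [Pi.zero_apply, mul_zero]
      apply mul_left_cancel₀ h2
      linear_combination k1 + k2
    · obtain ⟨j, hj⟩ := Function.ne_iff.1 hfx
      simp only [Pi.zero_apply] at hj
      have H : ∀ x : Fin n → F, f0 + ∑ j, fx j * x j = 0 → g0 + ∑ j, gx j * x j = 0 := by
        intro x hx
        obtain ⟨b, hb⟩ := exists_b q hq hF σ hσ hσσ α β x
        exact H1 x b hb hx
      have key : ∀ k, j ≠ k → ∀ z, g0 + (gx j * (-(f0 + fx k * z) / fx j) + gx k * z) = 0 := by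
        intro k hjk z
        rw [← two j k hjk (fun l y => gx l * y) (by simp)]
        refine H _ ?_
        rw [two j k hjk (fun l y => fx l * y) (by simp)]
        field_simp
        ring
      have hg0 : g0 = gx j / fx j * f0 := by
        obtain ⟨k, hjk⟩ := other j
        have := key k hjk 0
        linear_combination this
      refine ⟨gx j / fx j, hg0, fun k => ?_, by simp⟩
      by_cases hjk : j = k
      · subst hjk; field_simp
      · have := key k hjk 1
        linear_combination this - hg0
  · refine ⟨gr / fr, ?_⟩
    set a := gr / fr with ha
    have hgr : gr = a * fr := by rw [ha]; field_simp
    let m : Fin n → F := fun j => - fx j / fr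
    let m0 : F := - f0 / fr
    have H : ∀ x : Fin n → F, (σ m0 - m0) + ∑ j, tau σ α β (m j) (x j) = 0 →
        (g0 - a * f0) + ∑ j, (gx j - a * fx j) * x j = 0 := by
      intro x hx
      have hb : fr * (m0 + ∑ j, m j * x j) = - (f0 + ∑ j, fx j * x j) := by
        rw [mul_add, Finset.mul_sum, neg_add, ← Finset.sum_neg_distrib]
        congr 1
        · simp only [m0]; field_simp
        · refine Finset.sum_congr rfl fun j _ => ?_
          simp only [m]; field_simp
      have := H1 x (m0 + ∑ j, m j * x j) ?_ ?_
      · rw [hgr, mul_assoc, hb] at this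
        simp only [sub_mul, Finset.sum_sub_distrib, mul_assoc, ← Finset.mul_sum]
        linear_combination this
      · rw [E_iff q σ hσ]
        unfold rhs
        simp only [tau, Finset.sum_sub_distrib] at hx ⊢
        rw [map_add, map_sum]
        linear_combination hx
      · rw [hb]; ring
    have hsol : ∀ j0 : Fin n, ∃ (j1 j2 : Fin n), j0 ≠ j1 ∧ j0 ≠ j2 ∧ j1 ≠ j2 := by
      intro j0
      have h1 : 1 < (Finset.univ.erase j0).card := by
        rw [Finset.card_erase_of_mem (Finset.mem_univ _), Finset.card_univ, Fintype.card_fin]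
        omega
      obtain ⟨j1, h1, j2, h2, h12⟩ := Finset.one_lt_card.1 h1
      exact ⟨j1, j2, (Finset.ne_of_mem_erase h1).symm, (Finset.ne_of_mem_erase h2).symm, h12⟩
    have three : ∀ (j k l : Fin n), j ≠ k → j ≠ l → k ≠ l → ∀ (h : Fin n → F → F),
        (∀ l, h l 0 = 0) → ∀ y z w,
        ∑ p, h p ((if p = j then y else if p = k then z else if p = l then w else 0))
          = h j y + h k z + h l w := by
      intro j k l hjk hjl hkl h h0 y z w
      rw [← Finset.sum_subset (Finset.subset_univ {j, k, l}), Finset.sum_insert (by simp [hjk, hjl]),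
        Finset.sum_pair hkl]
      · simp [hjk.symm, hjl.symm, hkl.symm, add_assoc]
      · intro p _ hp
        simp only [Finset.mem_insert, Finset.mem_singleton, not_or] at hp
        simp [hp.1, hp.2.1, hp.2.2, h0]
    have hskm : σ (σ m0 - m0) = -(σ m0 - m0) := by rw [map_sub, hσσ]; ring
    have hd : ∀ j, gx j - a * fx j = 0 := by
      intro j0
      obtain ⟨j1, j2, h01, h02, h12⟩ := hsol j0
      obtain ⟨y, y', hyy, hty⟩ := tau_not_inj q hq hF σ hσ hσσ α β (m j0)
      obtain ⟨z1, z2, hz⟩ := quad q hq hqodd hF σ hσ hσσ α β hα hβ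
        (σ m0 - m0 + tau σ α β (m j0) y)
        (by rw [map_add, hskm, tau_skew σ hσσ]; ring) (m j1) (m j2)
      have key : ∀ w, tau σ α β (m j0) w = tau σ α β (m j0) y →
          (g0 - a * f0) + ((gx j0 - a * fx j0) * w + (gx j1 - a * fx j1) * z1 +
            (gx j2 - a * fx j2) * z2) = 0 := by
        intro w hw
        rw [← three j0 j1 j2 h01 h02 h12 (fun l y => (gx l - a * fx l) * y) (by simp)]
        apply H
        rw [three j0 j1 j2 h01 h02 h12 (fun l y => tau σ α β (m l) y)
          (fun _ => tau_zero _ _ _ _), hw]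
        linear_combination hz
      have k1 := key y rfl
      have k2 := key y' hty.symm
      have : (gx j0 - a * fx j0) * (y - y') = 0 := by linear_combination k1 - k2
      exact (mul_eq_zero.1 this).resolve_right (sub_ne_zero.2 hyy)
    refine ⟨?_, fun j => sub_eq_zero.1 (hd j), hgr⟩
    obtain ⟨j1, j2, h01, h02, h12⟩ := hsol ⟨0, by omega⟩
    obtain ⟨z1, z2, hz⟩ := quad q hq hqodd hF σ hσ hσσ α β hα hβ
        (σ m0 - m0) hskm (m j1) (m j2)
    have := H (fun l => if l = j1 then z1 else if l = j2 then z2 else 0) (by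
      rw [two j1 j2 h12 (fun l y => tau σ α β (m l) y) (fun _ => tau_zero _ _ _ _)]
      linear_combination hz)
    simp only [hd, zero_mul, Finset.sum_const_zero, add_zero] at this
    exact sub_eq_zero.1 this

lemma minimal (q : ℕ) (hq : 3 ≤ q) (hqodd : Odd q) (hF : Fintype.card F = q ^ 2)
    (σ : F →+* F) (hσ : ∀ x, σ x = x ^ q) (hσσ : ∀ x, σ (σ x) = x) (α β : F) (hα : α ≠ 0) (hβ : σ β ≠ β) {n : ℕ} (hn : 3 ≤ n) : IsMinimalCode (Bset F q (n+1) α β) := by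
  intro f hf
  refine ⟨hf, fun g _ hgf => ?_⟩
  have H : ∀ v : Fin (n+2) → F, v ≠ 0 → P q α β v → f v = 0 → g v = 0 := by
    intro v hv hP hfv
    have hm := (mem_B q α β v hv).2 hP
    by_contra hg
    exact hgf ⟨_, hm⟩ (fun h => hg ((cw_zero_iff _ g v hv hm).1 h))
      ((cw_zero_iff _ f v hv hm).2 hfv)
  obtain ⟨f0, fx, fr, hff⟩ := dual_form f
  obtain ⟨g0, gx, gr, hgg⟩ := dual_form g
  obtain ⟨a, h0, hx, hr⟩ := core q hq hqodd hF σ hσ hσσ α β hα hβ hn f0 g0 fr gr fx gx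
    (by
      intro x b hE hf0
      have := H (V 1 x b) (fun h => by simpa using congrFun h 0) ((P_one _ _ _ _ _).2 hE)
        (by rw [hff, mul_one]; exact hf0)
      rwa [hgg, mul_one] at this)
    (by
      intro x b hQ hf0
      by_cases hv : V 0 x b = 0
      · have h := hgg 0 x b
        rw [hv, map_zero] at h
        rw [h]; ring
      have := H (V 0 x b) hv ((P_zero _ _ _ _ _).2 hQ)
        (by rw [hff, mul_zero, zero_add]; exact hf0)
      rwa [hgg, mul_zero, zero_add] at this)
    (by
      rintro ⟨rfl, rfl, rfl⟩
      apply hf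
      ext A
      obtain ⟨a, x, b, hv⟩ := V_surj A.1.rep
      simp [cw, hv, hff])
  refine ⟨a, ?_⟩
  ext A
  obtain ⟨c, x, b, hv⟩ := V_surj A.1.rep
  simp only [cw, Pi.smul_apply, smul_eq_mul]
  rw [hv, hff, hgg, h0, hr]
  simp only [hx, mul_assoc, ← Finset.mul_sum]
  ring

lemma spans (q : ℕ) (hq : 3 ≤ q) (hF : Fintype.card F = q ^ 2) (σ : F →+* F)
    (hσ : ∀ x, σ x = x ^ q) (hσσ : ∀ x, σ (σ x) = x) (α β : F) {n : ℕ} :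
    Submodule.span F (Projectivization.rep '' Bset F q (n+1) α β) = ⊤ := by
  classical
  by_contra hne
  obtain ⟨g, hg0, hg⟩ := Submodule.exists_le_ker_of_lt_top _ (lt_top_iff_ne_top.2 hne)
  obtain ⟨g0, gx, gr, hgg⟩ := dual_form g
  have H : ∀ (x : Fin n → F) b, E q α β x b → g0 + ∑ j, gx j * x j + gr * b = 0 := by
    intro x b hE
    have hv : V 1 x b ≠ 0 := fun h => by simpa using congrFun h 0
    have hm := (mem_B q α β _ hv).2 ((P_one _ _ _ _ _).2 hE)
    have h1 : g (Projectivization.mk F _ hv).rep = 0 :=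
      hg (Submodule.subset_span ⟨_, hm, rfl⟩)
    have h2 := (cw_zero_iff _ g _ hv hm).1 h1
    rwa [hgg, mul_one] at h2
  have e0 := H 0 0 ((E_iff q σ hσ _ _ _ _).2 (by simp [rhs]))
  have e1 := H 0 1 ((E_iff q σ hσ _ _ _ _).2 (by simp [rhs]))
  simp at e0 e1
  rw [e0] at e1 H
  simp at e1
  have hx : ∀ j, gx j = 0 := by
    intro j
    obtain ⟨b, hb⟩ := exists_b q hq hF σ hσ hσσ α β (Pi.single j 1)
    have := H _ b hb
    simpa [e1, Pi.single_apply] using this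
  apply hg0
  ext1 v
  apply LinearMap.ext
  intro y
  obtain ⟨c, x, b, hv⟩ := V_surj (LinearMap.single F (fun _ => F) v y)
  simp only [LinearMap.comp_apply]
  rw [hv, hgg]
  simp [e0, e1, hx]

end
end S7

/-- for `q` odd and `r > 3`, the hypersurface `B` spans `PG(r,q²)`
(so `C(B)` has dimension `r+1`), the projective code `C(B)` is a minimal code,
and its length `|B|` is as stated. -/
theorem statement7 (q r : ℕ) (hq : IsPrimePow q) (hqodd : Odd q) (hr : 3 < r)
    (F : Type) [Field F] [Fintype F] (hF : Fintype.card F = q ^ 2)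
    (α β : F) (hα : α ≠ 0) (hβ : β ^ q ≠ β)
    (hcond : (Odd r ∧ 4 * α ^ (q + 1) + (β ^ q - β) ^ 2 ≠ 0) ∨
      (Even r ∧ ∀ t : F, t ^ q = t → t ^ 2 ≠ 4 * α ^ (q + 1) + (β ^ q - β) ^ 2)) :
    Submodule.span F (Projectivization.rep '' Bset F q r α β) = ⊤ ∧
    IsMinimalCode (Bset F q r α β) ∧
    (Odd r → Nat.card ↥(Bset F q r α β) =
      q ^ (2 * r - 1) + q ^ (r - 1) + (q ^ (2 * (r - 1)) - q ^ 2) / (q ^ 2 - 1) + 1) ∧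
    (Even r → Nat.card ↥(Bset F q r α β) =
      q ^ (2 * r - 1) + (q ^ (2 * (r - 1)) - q ^ 2) / (q ^ 2 - 1) + 1) := by
  obtain ⟨n, rfl⟩ : ∃ n, r = n + 1 := ⟨r - 1, by omega⟩
  obtain ⟨σ, hσ, hσσ⟩ := S7.frob q hq hF
  have hq3 := S7.q_ge q hq hqodd
  have hβ' : σ β ≠ β := by rwa [hσ]
  refine ⟨S7.spans q hq3 hF σ hσ hσσ α β,
    S7.minimal q hq3 hqodd hF σ hσ hσσ α β hα hβ' (by omega), ?_⟩
  exact S7.card_B q hq3 hF σ hσ hσσ hqodd n (by omega) α β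
end

section
/- Let q be an odd prime power, r > 3, and let B be the hypersurface of PG(r,q²) defined below (with the stated conditions on α and β). Then the projective code C(B) is q-divisible: for every hyperplane Σ of PG(r,q²), q divides |B| − |B ∩ Σ| (equivalently, every weight of C(B) is divisible by q). -/
/-- A free action of a finite additive group, given by explicit maps. -/
theorem card_dvd_of_free {V G : Type*} [Finite V] [AddCommGroup G] (D : Set V)
    (T : G → V → V) (hD : ∀ t, ∀ x ∈ D, T t x ∈ D) (h0 : ∀ x ∈ D, T 0 x = x)
    (hadd : ∀ s t, ∀ x ∈ D, T (s + t) x = T s (T t x))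
    (hfree : ∀ t, ∀ x ∈ D, T t x = x → t = 0) : Nat.card G ∣ Nat.card D := by
  let act : AddAction G D :=
    { vadd := fun t x => ⟨T t x.1, hD t x.1 x.2⟩
      zero_vadd := fun x => Subtype.ext (h0 x.1 x.2)
      add_vadd := fun s t x => Subtype.ext (hadd s t x.1 x.2) }
  have e := AddAction.selfEquivOrbitsQuotientProd (G := G) (X := D) (by
    intro b
    rw [eq_bot_iff]
    intro t ht
    rw [AddAction.mem_stabilizer_iff] at ht
    exact (AddSubgroup.mem_bot).2 (hfree t b.1 b.2 (congrArg Subtype.val ht)))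
  rw [Nat.card_congr e, Nat.card_prod]
  exact dvd_mul_left _ _

section fld
set_option linter.unusedSectionVars false
variable {F : Type} [Field F] [Fintype F]

theorem neg_card_le (q : ℕ) (hq : 1 < q) (c : F) : Nat.card {z : F | z ^ q = c * z} ≤ q := by
  classical
  have hne : (Polynomial.X ^ q - Polynomial.C c * Polynomial.X : Polynomial F) ≠ 0 := by
    intro h
    have := congrArg (fun P => Polynomial.coeff P q) h
    simp [Polynomial.coeff_X, hq.ne] at this
  have hsub : {z : F | z ^ q = c * z} ⊆
      ((Polynomial.X ^ q - Polynomial.C c * Polynomial.X : Polynomial F).roots.toFinset : Set F) := by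
    intro z hz
    simp only [Set.mem_ofPred_eq] at hz
    simp only [Finset.mem_coe, Multiset.mem_toFinset]
    rw [Polynomial.mem_roots hne]
    simp [hz]
  rw [Nat.card_coe_set_eq]
  refine (Set.ncard_le_ncard hsub (Finset.finite_toSet _)).trans ?_
  rw [Set.ncard_coe_finset]
  refine (Multiset.toFinset_card_le _).trans ((Polynomial.card_roots' _).trans ?_)
  refine (Polynomial.natDegree_sub_le _ _).trans ?_
  simp only [Polynomial.natDegree_X_pow, sup_le_iff, le_refl, true_and]
  exact (Polynomial.natDegree_C_mul_le _ _).trans (by simpa using hq.le)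

/-- the kernel of an additive map into the `-1`-eigenspace has at least `q` elements -/
theorem ker_card_ge (q : ℕ) (hq : 1 < q) (hF : Fintype.card F = q ^ 2) (g : F →+ F)
    (hg : ∀ x, (g x) ^ q = - g x) : q ≤ Nat.card g.ker := by
  have h1 := g.ker.card_mul_index
  rw [AddSubgroup.index_ker, Nat.card_eq_fintype_card (α := F), hF] at h1
  have h2 : Nat.card g.range ≤ q := by
    refine le_trans ?_ (neg_card_le q hq (-1 : F))
    refine Nat.card_mono (Set.toFinite _) ?_
    rintro _ ⟨x, rfl⟩
    simp [hg]
  by_contra h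
  push Not at h
  nlinarith

/-- The subfield with `q` elements as an additive group. -/
def Kq (φ : F →+* F) : AddSubgroup F := (φ.toAddMonoidHom - AddMonoidHom.id F).ker

theorem mem_Kq (φ : F →+* F) (t : F) : t ∈ Kq φ ↔ φ t = t := by
  simp [Kq, AddMonoidHom.mem_ker, sub_eq_zero]

theorem card_Kq (q : ℕ) (hq : 1 < q) (hF : Fintype.card F = q ^ 2) (φ : F →+* F)
    (hφ : ∀ x, φ x = x ^ q) (hφφ : ∀ x, φ (φ x) = x) : Nat.card (Kq φ) = q := by
  apply le_antisymm
  · refine le_trans ?_ (neg_card_le q hq (1 : F))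
    refine Nat.card_mono (Set.toFinite _) ?_
    intro x hx
    have := (mem_Kq φ x).1 hx
    simpa [hφ] using this
  · apply ker_card_ge q hq hF
    intro x
    rw [← hφ]
    simp [hφφ]

/-- An additive map `F → F` sends some nonzero element to the subfield. -/
theorem exists_k (q : ℕ) (hq : 1 < q) (hF : Fintype.card F = q ^ 2) (φ : F →+* F)
    (hφ : ∀ x, φ x = x ^ q) (hφφ : ∀ x, φ (φ x) = x) (P : F →+ F) :
    ∃ k : F, k ≠ 0 ∧ φ (P k) = P k := by
  have h := ker_card_ge q hq hF ((φ.toAddMonoidHom - AddMonoidHom.id F).comp P) (by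
    intro x
    rw [← hφ]
    simp [hφφ])
  have : Nontrivial ((φ.toAddMonoidHom - AddMonoidHom.id F).comp P).ker := by
    rw [← Finite.one_lt_card_iff_nontrivial]; omega
  obtain ⟨⟨k, hk⟩, hk0⟩ := exists_ne (0 : ((φ.toAddMonoidHom - AddMonoidHom.id F).comp P).ker)
  refine ⟨k, fun h => hk0 (Subtype.ext h), ?_⟩
  simpa [AddMonoidHom.mem_ker, sub_eq_zero] using hk

end fld

/-- The projective count is a vector count on the affine hyperplane `f = 1`. -/
def Cond {F : Type} [Field F] (q r : ℕ) (α β : F) (v : Fin (r + 1) → F) : Prop :=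
  (v 0 ≠ 0 ∧ affEq q r α β fun i => v i / v 0) ∨
       (v 0 = 0 ∧ (∑ i : Fin (r + 1), if 1 ≤ i.1 ∧ i.1 < r then v i ^ 2 else 0) = 0)

theorem Cond_smul {F : Type} [Field F] (q r : ℕ) (α β : F) (v : Fin (r + 1) → F) (c : F)
    (hc : c ≠ 0) : Cond q r α β (c • v) ↔ Cond q r α β v := by
  unfold Cond
  have h1 : (fun i => (c • v) i / (c • v) 0) = fun i => v i / v 0 := by
    funext i
    simp [mul_div_mul_left _ _ hc]
  have h2 : (∑ i : Fin (r + 1), if 1 ≤ i.1 ∧ i.1 < r then (c • v) i ^ 2 else 0) =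
      c ^ 2 * ∑ i : Fin (r + 1), if 1 ≤ i.1 ∧ i.1 < r then v i ^ 2 else 0 := by
    rw [Finset.mul_sum]
    refine Finset.sum_congr rfl fun i _ => ?_
    split_ifs <;> simp [mul_pow]
  rw [h1, h2]
  simp [hc]

theorem card_weight {F : Type} [Field F] [Fintype F] (q r : ℕ) (α β : F)
    (f : Module.Dual F (Fin (r + 1) → F)) :
    Nat.card ↥(Bset F q r α β) - Nat.card ↥(Bset F q r α β ∩ {P | f P.rep = 0}) =
      Nat.card {v : Fin (r + 1) → F | f v = 1 ∧ Cond q r α β v} := by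
  have hfin : Finite (Projectivization F (Fin (r + 1) → F)) := by
    unfold Projectivization; infer_instance
  have h1 : Nat.card ↥(Bset F q r α β) - Nat.card ↥(Bset F q r α β ∩ {P | f P.rep = 0}) =
      Nat.card ↥(Bset F q r α β \ {P | f P.rep = 0}) := by
    simp only [Nat.card_coe_set_eq]
    have := Set.ncard_inter_add_ncard_sdiff_eq_ncard (Bset F q r α β) {P | f P.rep = 0} (Set.toFinite _)
    omega
  rw [h1]
  symm
  have hne : ∀ v : Fin (r + 1) → F, f v = 1 → v ≠ 0 := by
    rintro v hv rfl
    simp at hv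
  have hB : ∀ P, P ∈ Bset F q r α β ↔ Cond q r α β P.rep := fun P => Iff.rfl
  refine Nat.card_congr (Equiv.ofBijective
    (fun v => ⟨Projectivization.mk F v.1 (hne v.1 v.2.1), ?_, ?_⟩) ⟨?_, ?_⟩)
  · obtain ⟨a, ha⟩ := Projectivization.exists_smul_eq_mk_rep F v.1 (hne v.1 v.2.1)
    rw [hB, ← ha]
    exact (Cond_smul q r α β v.1 (a : F) a.ne_zero).2 v.2.2
  · obtain ⟨a, ha⟩ := Projectivization.exists_smul_eq_mk_rep F v.1 (hne v.1 v.2.1)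
    simp only [Set.mem_ofPred_eq]
    rw [← ha, Units.smul_def, map_smul, v.2.1]
    simp
  · rintro ⟨v, hv, hv'⟩ ⟨w, hw, hw'⟩ h
    have h' := congrArg Subtype.val h
    simp only at h'
    rw [Projectivization.mk_eq_mk_iff'] at h'
    obtain ⟨a, ha⟩ := h'
    have := congrArg f ha
    rw [map_smul, hv, hw] at this
    simp at this
    subst this
    simp at ha
    exact Subtype.ext ha.symm
  · rintro ⟨P, hP, hP'⟩
    have h0 : f P.rep ≠ 0 := hP'
    refine ⟨⟨(f P.rep)⁻¹ • P.rep, ?_, ?_⟩, ?_⟩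
    · simp [h0]
    · exact (Cond_smul q r α β _ _ (inv_ne_zero h0)).2 hP
    · apply Subtype.ext
      simp only
      conv_rhs => rw [← P.mk_rep]
      rw [Projectivization.mk_eq_mk_iff']
      exact ⟨_, rfl⟩

section forms
set_option linter.unusedSectionVars false
variable {F : Type} [Field F] {r : ℕ}

/-- indices `1 ≤ i < r` -/
def mid (r : ℕ) : Finset (Fin (r + 1)) := Finset.univ.filter fun i => 1 ≤ i.1 ∧ i.1 < r

/-- the bilinear form -/
def bil (x y : Fin (r + 1) → F) : F := ∑ i ∈ mid r, x i * y i

/-- the hermitian form -/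
def herm (φ : F →+* F) (x : Fin (r + 1) → F) : F := ∑ i ∈ mid r, φ (x i) * x i

theorem bil_add_left (x y z : Fin (r + 1) → F) : bil (x + y) z = bil x z + bil y z := by
  simp [bil, add_mul, Finset.sum_add_distrib]

theorem bil_smul_left (c : F) (x z : Fin (r + 1) → F) : bil (c • x) z = c * bil x z := by
  simp [bil, Finset.mul_sum, mul_assoc]

theorem bil_comm (x y : Fin (r + 1) → F) : bil x y = bil y x := by
  simp [bil, mul_comm]

theorem bil_add_right (x y z : Fin (r + 1) → F) : bil z (x + y) = bil z x + bil z y := by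
  rw [bil_comm, bil_add_left, bil_comm x, bil_comm y]

theorem bil_smul_right (c : F) (x z : Fin (r + 1) → F) : bil z (c • x) = c * bil z x := by
  rw [bil_comm, bil_smul_left, bil_comm x]

theorem last_notMem_mid : Fin.last r ∉ mid r := by simp [mid]

theorem zero_notMem_mid : (0 : Fin (r + 1)) ∉ mid r := by simp [mid]

/-- the function whose values in the subfield describe the affine points -/
def Yf (φ : F →+* F) (α β : F) (x : Fin (r + 1) → F) : F :=
  x (Fin.last r) + α * bil x x - β * herm φ x

theorem herm_fix (φ : F →+* F) (hφφ : ∀ x, φ (φ x) = x) (x : Fin (r + 1) → F) :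
    φ (herm φ x) = herm φ x := by
  simp [herm, map_sum, hφφ, mul_comm]

theorem affEq_iff (q : ℕ) (φ : F →+* F) (hφ : ∀ x, φ x = x ^ q) (hφφ : ∀ x, φ (φ x) = x)
    (α β : F) (x : Fin (r + 1) → F) :
    affEq q r α β x ↔ φ (Yf φ α β x) = Yf φ α β x := by
  have h1 : (∑ i : Fin (r + 1), if 1 ≤ i.1 ∧ i.1 < r then x i ^ (2 * q) else 0) = φ (bil x x) := by
    rw [← Finset.sum_filter, bil, map_sum]
    refine Finset.sum_congr rfl fun i _ => ?_
    rw [hφ, ← sq, ← pow_mul]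
  have h2 : (∑ i : Fin (r + 1), if 1 ≤ i.1 ∧ i.1 < r then x i ^ 2 else 0) = bil x x := by
    rw [← Finset.sum_filter, bil]
    exact Finset.sum_congr rfl fun i _ => sq _
  have h3 : (∑ i : Fin (r + 1), if 1 ≤ i.1 ∧ i.1 < r then x i ^ (q + 1) else 0) = herm φ x := by
    rw [← Finset.sum_filter, herm]
    exact Finset.sum_congr rfl fun i _ => by rw [hφ, pow_succ]
  unfold affEq
  rw [h1, h2, h3, ← hφ, ← hφ, ← hφ]
  unfold Yf
  rw [map_sub, map_add, map_mul, map_mul, herm_fix φ hφφ]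
  constructor <;> intro h <;> linear_combination h

/-- change of `Yf` along the direction `w` -/
def Pm (φ : F →+* F) (α β c m : F) : F →+ F where
  toFun l := l * c + 2 * α * l * m - β * (l * φ m + φ l * m)
  map_zero' := by simp
  map_add' a b := by simp only [map_add]; ring

theorem Pm_smul (φ : F →+* F) (α β c m t l : F) (ht : φ t = t) :
    Pm φ α β c m (t * l) = t * Pm φ α β c m l := by
  simp only [Pm, AddMonoidHom.coe_mk, ZeroHom.coe_mk, map_mul, ht]; ring

theorem herm_add (φ : F →+* F) (x w : Fin (r + 1) → F) (l : F)
    (hw : ∀ i ∈ mid r, φ (w i) = w i) (hww : bil w w = 0) :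
    herm φ (x + l • w) = herm φ x + (l * φ (bil x w) + φ l * bil x w) := by
  have : herm φ (x + l • w) = herm φ x + (l * φ (bil x w) + φ l * bil x w) + φ l * l * bil w w := by
    simp only [herm, bil, map_sum, Finset.mul_sum, ← Finset.sum_add_distrib]
    refine Finset.sum_congr rfl fun i hi => ?_
    simp only [Pi.add_apply, Pi.smul_apply, smul_eq_mul, map_add, map_mul, hw i hi]
    ring
  rw [this, hww]; ring

theorem Yf_add (φ : F →+* F) (α β : F) (x w : Fin (r + 1) → F) (l : F)
    (hw : ∀ i ∈ mid r, φ (w i) = w i) (hww : bil w w = 0) :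
    Yf φ α β (x + l • w) = Yf φ α β x + Pm φ α β (w (Fin.last r)) (bil x w) l := by
  unfold Yf
  rw [herm_add φ x w l hw hww]
  simp only [bil_add_left, bil_add_right, bil_smul_left, bil_smul_right, hww, bil_comm w x, Pm,
    AddMonoidHom.coe_mk, ZeroHom.coe_mk, Pi.add_apply, Pi.smul_apply, smul_eq_mul]
  ring

theorem Cond_iff (q : ℕ) (φ : F →+* F) (hφ : ∀ x, φ x = x ^ q) (hφφ : ∀ x, φ (φ x) = x)
    (α β : F) (v : Fin (r + 1) → F) :
    Cond q r α β v ↔ (v 0 ≠ 0 ∧ φ (Yf φ α β ((v 0)⁻¹ • v)) = Yf φ α β ((v 0)⁻¹ • v)) ∨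
      (v 0 = 0 ∧ bil v v = 0) := by
  have h1 : (fun i => v i / v 0) = (v 0)⁻¹ • v := by
    funext i; simp [div_eq_inv_mul]
  have h2 : (∑ i : Fin (r + 1), if 1 ≤ i.1 ∧ i.1 < r then v i ^ 2 else 0) = bil v v := by
    rw [← Finset.sum_filter, bil]
    exact Finset.sum_congr rfl fun i _ => sq _
  unfold Cond
  rw [h1, h2, affEq_iff q φ hφ hφφ]

/-- pure translation along the last coordinate -/
theorem bil_last (x : Fin (r + 1) → F) (c : F) : bil x (Pi.single (Fin.last r) c) = 0 := by
  refine Finset.sum_eq_zero fun i hi => ?_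
  have : i ≠ Fin.last r := by rintro rfl; exact last_notMem_mid hi
  simp [Pi.single_apply, this]

theorem bil_single (x : Fin (r + 1) → F) (j : Fin (r + 1)) (hj : j ∈ mid r) (c : F) :
    bil x (Pi.single j c) = x j * c := by
  unfold bil
  rw [Finset.sum_eq_single_of_mem j hj]
  · simp
  · intro i _ hi; simp [hi]

theorem exists_wz (φ : F →+* F) (hr : 3 < r) (f : Module.Dual F (Fin (r + 1) → F))
    (hf : f (Pi.single (Fin.last r) 1) ≠ 0) (hab : ∃ a b : F, φ a = a ∧ φ b = b ∧ a ^ 2 + b ^ 2 = -1) :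
    ∃ w z : Fin (r + 1) → F, w 0 = 0 ∧ z 0 = 0 ∧ f w = 0 ∧ f z = 0 ∧
      (∀ i ∈ mid r, φ (w i) = w i) ∧ bil w w = 0 ∧ bil w z = 0 ∧ w ≠ 0 ∧
      (∀ c d : F, c • z = d • w → c = 0) := by
  obtain ⟨a, b, ha, hb, hab⟩ := hab
  let e1 : Fin (r + 1) := ⟨1, by omega⟩
  let e2 : Fin (r + 1) := ⟨2, by omega⟩
  let e3 : Fin (r + 1) := ⟨3, by omega⟩
  have m1 : e1 ∈ mid r := by simp [mid, e1]; omega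
  have m2 : e2 ∈ mid r := by simp [mid, e2]; omega
  have m3 : e3 ∈ mid r := by simp [mid, e3]; omega
  have h12 : e1 ≠ e2 := by simp [e1, e2]
  have h13 : e1 ≠ e3 := by simp [e1, e3]
  have h23 : e2 ≠ e3 := by simp [e2, e3]
  have l1 : e1 ≠ Fin.last r := fun h => last_notMem_mid (h ▸ m1)
  have l2 : e2 ≠ Fin.last r := fun h => last_notMem_mid (h ▸ m2)
  have l3 : e3 ≠ Fin.last r := fun h => last_notMem_mid (h ▸ m3)
  have z1 : e1 ≠ 0 := fun h => zero_notMem_mid (h ▸ m1)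
  have z2 : e2 ≠ 0 := fun h => zero_notMem_mid (h ▸ m2)
  have z3 : e3 ≠ 0 := fun h => zero_notMem_mid (h ▸ m3)
  have zl : Fin.last r ≠ 0 := by
    intro h; have := congrArg Fin.val h; simp at this; omega
  let w0 : Fin (r + 1) → F := Pi.single e1 a + Pi.single e2 b + Pi.single e3 1
  let z0 : Fin (r + 1) → F := Pi.single e1 b + Pi.single e2 (-a)
  let E : Fin (r + 1) → F := Pi.single (Fin.last r) 1
  let cw : F := - (f w0 / f E)
  let cz : F := - (f z0 / f E)
  have hE : ∀ (x : Fin (r + 1) → F) (c : F), bil x (c • E) = 0 := fun x c => by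
    rw [bil_smul_right, bil_last, mul_zero]
  have hw1 : (w0 + cw • E) e1 = a := by simp [w0, E, l1, h12, h13]
  have hw2 : (w0 + cw • E) e2 = b := by simp [w0, E, l2, h12.symm, h23]
  have hw3 : (w0 + cw • E) e3 = 1 := by simp [w0, E, l3, h13.symm, h23.symm]
  have hz1 : (z0 + cz • E) e1 = b := by simp [z0, E, l1, h12]
  have hz2 : (z0 + cz • E) e2 = -a := by simp [z0, E, l2, h12.symm]
  have hz3 : (z0 + cz • E) e3 = 0 := by simp [z0, E, l3, h13.symm, h23.symm]
  refine ⟨w0 + cw • E, z0 + cz • E, ?_, ?_, ?_, ?_, ?_, ?_, ?_, ?_, ?_⟩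
  · simp [w0, E, z1.symm, z2.symm, z3.symm, zl.symm]
  · simp [z0, E, z1.symm, z2.symm, zl.symm]
  · rw [map_add, map_smul, smul_eq_mul]; simp only [cw]; rw [neg_mul, div_mul_cancel₀ _ hf]; ring
  · rw [map_add, map_smul, smul_eq_mul]; simp only [cz]; rw [neg_mul, div_mul_cancel₀ _ hf]; ring
  · intro i hi
    have hil : i ≠ Fin.last r := fun h => last_notMem_mid (h ▸ hi)
    by_cases i1 : i = e1
    · rw [i1, hw1, ha]
    by_cases i2 : i = e2
    · rw [i2, hw2, hb]
    by_cases i3 : i = e3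
    · rw [i3, hw3, map_one]
    have : (w0 + cw • E) i = 0 := by simp [w0, E, i1, i2, i3, hil]
    rw [this, map_zero]
  · rw [bil_add_right, hE]
    simp only [w0]
    rw [bil_add_right, bil_add_right, bil_single _ _ m1, bil_single _ _ m2, bil_single _ _ m3]
    change (w0 + cw • E) e1 * a + (w0 + cw • E) e2 * b + (w0 + cw • E) e3 * 1 + 0 = 0
    rw [hw1, hw2, hw3]
    linear_combination hab
  · rw [bil_add_right, hE]
    simp only [z0]
    rw [bil_add_right, bil_single _ _ m1, bil_single _ _ m2, hw1, hw2]
    ring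
  · intro h
    rw [h] at hw3
    simp at hw3
  · intro c d h
    have k1 := congrFun h e1
    have k2 := congrFun h e2
    have k3 := congrFun h e3
    simp only [Pi.smul_apply, smul_eq_mul, hw1, hw2, hw3, hz1, hz2, hz3] at k1 k2 k3
    have hd : d = 0 := by linear_combination -k3
    subst hd
    linear_combination -b * k1 + a * k2 + c * hab

end forms

theorem main_count (q r : ℕ) (hq : 1 < q) (hr : 3 < r)
    (F : Type) [Field F] [Fintype F] (hF : Fintype.card F = q ^ 2) (h2 : (2 : F) ≠ 0)
    (φ : F →+* F) (hφ : ∀ x, φ x = x ^ q) (hφφ : ∀ x, φ (φ x) = x)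
    (hab : ∃ a b : F, φ a = a ∧ φ b = b ∧ a ^ 2 + b ^ 2 = -1)
    (α β : F) (f : Module.Dual F (Fin (r + 1) → F)) :
    q ∣ Nat.card {v : Fin (r + 1) → F | f v = 1 ∧ Cond q r α β v} := by
  classical
  have hKc := card_Kq q hq hF φ hφ hφφ
  have hK : ∀ t : Kq φ, φ (t : F) = t := fun t => (mem_Kq φ t).1 t.2
  let E : Fin (r + 1) → F := Pi.single (Fin.last r) 1
  have hsm : ∀ (c : F) (x : Fin (r + 1) → F), x ≠ 0 → c • x = 0 → c = 0 := fun c x hx h =>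
    (smul_eq_zero.1 h).resolve_right hx
  -- decomposition
  have hsplit : {v : Fin (r + 1) → F | f v = 1 ∧ Cond q r α β v} =
      {v | f v = 1 ∧ v 0 ≠ 0 ∧ φ (Yf φ α β ((v 0)⁻¹ • v)) = Yf φ α β ((v 0)⁻¹ • v)} ∪
      {v | f v = 1 ∧ v 0 = 0 ∧ bil v v = 0} := by
    ext v
    simp only [Set.mem_ofPred_eq, Set.mem_union, Cond_iff q φ hφ hφφ]
    tauto
  rw [hsplit, Nat.card_coe_set_eq, Set.ncard_union_eq _ (Set.toFinite _) (Set.toFinite _),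
    ← Nat.card_coe_set_eq, ← Nat.card_coe_set_eq]
  swap
  · rw [Set.disjoint_left]
    rintro v ⟨_, h, _⟩ ⟨_, h', _⟩
    exact h h'
  by_cases hf : f E = 0
  · have hE0 : E 0 = 0 := by
      have : (0 : Fin (r + 1)) ≠ Fin.last r := by
        intro h; have := congrArg Fin.val h; simp at this; omega
      simp [E, this]
    have hEm : ∀ i ∈ mid r, φ (E i) = E i := by
      intro i hi
      have hil : i ≠ Fin.last r := fun h => last_notMem_mid (h ▸ hi)
      simp [E, hil]
    have hEne : E ≠ 0 := by
      intro h; have := congrFun h (Fin.last r); simp [E] at this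
    have hbE : ∀ x, bil x E = 0 := fun x => bil_last x 1
    apply dvd_add
    · rw [← hKc]
      refine card_dvd_of_free _ (fun (t : Kq φ) v => v + ((t : F) * v 0) • E) ?_ ?_ ?_ ?_
      · rintro t v ⟨h1, h0, hY⟩
        have hv0 : (v + ((t : F) * v 0) • E) 0 = v 0 := by simp [hE0]
        refine ⟨by simp [hf, h1], by rwa [hv0], ?_⟩
        have : (v 0)⁻¹ • (v + ((t : F) * v 0) • E) = (v 0)⁻¹ • v + (t : F) • E := by
          rw [smul_add, smul_smul]; congr 2; field_simp
        rw [hv0, this, Yf_add φ α β _ E t hEm (hbE E), map_add, hY, hbE]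
        simp [Pm, E, hK]
      · intro v _; simp
      · intro s t v _
        simp only [Pi.add_apply, Pi.smul_apply, hE0, AddSubgroup.coe_add]
        simp only [smul_zero, add_zero]
        module
      · rintro t v ⟨h1, h0, hY⟩ h
        have := hsm _ _ hEne (add_eq_left.1 h)
        exact Subtype.ext ((mul_eq_zero.1 this).resolve_right h0)
    · rw [← hKc]
      refine card_dvd_of_free _ (fun (t : Kq φ) v => v + (t : F) • E) ?_ ?_ ?_ ?_
      · rintro t v ⟨h1, h0, hY⟩
        refine ⟨by simp [hf, h1], by simp [hE0, h0], ?_⟩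
        rw [bil_add_right, bil_smul_right, hbE, bil_comm, bil_add_right, bil_smul_right, hbE, hY]
        simp
      · intro v _; simp
      · intro s t v _
        simp only [AddSubgroup.coe_add]
        module
      · rintro t v _ h
        exact Subtype.ext (hsm _ _ hEne (add_eq_left.1 h))
  · obtain ⟨w, z, hw0, hz0, hfw, hfz, hwφ, hww, hwz, hwne, hind⟩ := exists_wz φ hr f hf hab
    apply dvd_add
    · choose k hk0 hk using fun m => exists_k q hq hF φ hφ hφφ (Pm φ α β (w (Fin.last r)) m)
      rw [← hKc]
      refine card_dvd_of_free _ (fun (t : Kq φ) v =>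
        v + ((t : F) * v 0 * k (bil ((v 0)⁻¹ • v) w)) • w) ?_ ?_ ?_ ?_
      · rintro t v ⟨h1, h0, hY⟩
        have hv0 : ∀ c : F, (v + c • w) 0 = v 0 := by simp [hw0]
        refine ⟨by simp [hfw, h1], by rwa [hv0], ?_⟩
        have : ∀ c : F, (v 0)⁻¹ • (v + ((t : F) * v 0 * c) • w)
            = (v 0)⁻¹ • v + ((t : F) * c) • w := by
          intro c
          rw [smul_add, smul_smul]; congr 2; field_simp
        rw [hv0, this, Yf_add φ α β _ w _ hwφ hww, map_add, hY, Pm_smul _ _ _ _ _ _ _ (hK t),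
          map_mul, hK, hk]
      · intro v _; simp
      · intro s t v _
        have hv0 : ∀ c : F, (v + c • w) 0 = v 0 := by simp [hw0]
        have hb : ∀ c d : F, bil (d • (v + c • w)) w = bil (d • v) w := by
          intro c d
          simp [bil_smul_left, bil_add_left, hww]
        simp only [hv0, hb, AddSubgroup.coe_add]
        module
      · rintro t v ⟨h1, h0, hY⟩ h
        have := hsm _ _ hwne (add_eq_left.1 h)
        have := (mul_eq_zero.1 this).resolve_right (hk0 _)
        exact Subtype.ext ((mul_eq_zero.1 this).resolve_right h0)
    · have hs : {v : Fin (r + 1) → F | f v = 1 ∧ v 0 = 0 ∧ bil v v = 0} =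
          {v | f v = 1 ∧ v 0 = 0 ∧ bil v v = 0 ∧ bil v w = 0} ∪
          {v | f v = 1 ∧ v 0 = 0 ∧ bil v v = 0 ∧ bil v w ≠ 0} := by
        ext v
        simp only [Set.mem_ofPred_eq, Set.mem_union]
        tauto
      rw [hs, Nat.card_coe_set_eq, Set.ncard_union_eq _ (Set.toFinite _) (Set.toFinite _),
        ← Nat.card_coe_set_eq, ← Nat.card_coe_set_eq]
      swap
      · rw [Set.disjoint_left]
        rintro v ⟨_, _, _, h⟩ ⟨_, _, _, h'⟩
        exact h' h
      apply dvd_add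
      · rw [← hKc]
        refine card_dvd_of_free _ (fun (t : Kq φ) v => v + (t : F) • w) ?_ ?_ ?_ ?_
        · rintro t v ⟨h1, h0, hY, hm⟩
          refine ⟨by simp [hfw, h1], by simp [hw0, h0], ?_, ?_⟩
          · simp [bil_add_right, bil_smul_right, bil_add_left, bil_smul_left, bil_comm w v, hww, hm, hY]
          · simp [bil_add_left, bil_smul_left, hww, hm]
        · intro v _; simp
        · intro s t v _
          simp only [AddSubgroup.coe_add]
          module
        · rintro t v _ h
          exact Subtype.ext (hsm _ _ hwne (add_eq_left.1 h))
      · have hzw : bil z w = 0 := by rw [bil_comm, hwz]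
        rw [← hKc]
        refine card_dvd_of_free _ (fun (t : Kq φ) v => v + ((t : F) * bil v w) • z
          + (-((t : F) * bil v z + (t : F) ^ 2 * (bil z z / 2) * bil v w)) • w) ?_ ?_ ?_ ?_
        · rintro t v ⟨h1, h0, hY, hm⟩
          refine ⟨by simp [hfw, hfz, h1], by simp [hw0, hz0, h0], ?_, ?_⟩
          · simp only [bil_add_right, bil_smul_right, bil_add_left, bil_smul_left, bil_comm w v,
              bil_comm z v, hww, hwz, hzw, hY]
            field_simp
            ring
          · simpa [bil_add_left, bil_smul_left, hww, hzw] using hm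
        · intro v _; simp
        · intro s t v _
          have b1 : ∀ c d : F, bil (v + c • z + d • w) w = bil v w := by
            intro c d; simp [bil_add_left, bil_smul_left, hww, hzw]
          have b2 : ∀ c d : F, bil (v + c • z + d • w) z = bil v z + c * bil z z := by
            intro c d; simp [bil_add_left, bil_smul_left, hwz]
          simp only [b1, b2, AddSubgroup.coe_add]
          have h22 : bil z z = 2 * (bil z z / 2) := by field_simp
          generalize bil z z / 2 = u at h22 ⊢
          rw [h22]
          module
        · rintro t v ⟨_, _, _, hm⟩ h
          rw [add_assoc, add_eq_left, neg_smul, ← sub_eq_add_neg, sub_eq_zero] at h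
          exact Subtype.ext ((mul_eq_zero.1 (hind _ _ h)).resolve_right hm)

/-- for `q` odd and `r > 3`, the projective code `C(B)` is
`q`-divisible: for every hyperplane `Σ` of `PG(r,q²)`, `q` divides
`|B| − |B ∩ Σ|` (equivalently, every weight of `C(B)` is divisible by `q`). -/
theorem statement8 (q r : ℕ) (hq : IsPrimePow q) (hqodd : Odd q) (hr : 3 < r)
    (F : Type) [Field F] [Fintype F] (hF : Fintype.card F = q ^ 2)
    (α β : F) (hα : α ≠ 0) (hβ : β ^ q ≠ β)
    (hcond : (Odd r ∧ 4 * α ^ (q + 1) + (β ^ q - β) ^ 2 ≠ 0) ∨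
      (Even r ∧ ∀ t : F, t ^ q = t → t ^ 2 ≠ 4 * α ^ (q + 1) + (β ^ q - β) ^ 2)) :
    ∀ f : Module.Dual F (Fin (r + 1) → F), f ≠ 0 →
      q ∣ Nat.card ↥(Bset F q r α β) - Nat.card ↥(Bset F q r α β ∩ {P | f P.rep = 0}) := by
  intro f _
  rw [card_weight]
  obtain ⟨p, n, hp, hn, rfl⟩ := hq
  have hp' : p.Prime := hp.nat_prime
  have : Fact p.Prime := ⟨hp'⟩
  have hchar : CharP F p := by
    obtain ⟨p', hc⟩ := CharP.exists F
    obtain ⟨m, hp'', hm⟩ := FiniteField.card F p'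
    rw [hF] at hm
    have h1 : p ∣ p' ^ (m : ℕ) := by
      rw [← hm, ← pow_mul]; exact dvd_pow_self _ (by omega)
    have h2 := (Nat.prime_dvd_prime_iff_eq hp' hp'').1 (hp'.dvd_of_dvd_pow h1)
    rwa [h2]
  have hp2 : p ≠ 2 := by
    rintro rfl
    exact absurd hqodd (by simp [Nat.even_pow, hn.ne'])
  have h2 : (2 : F) ≠ 0 := Ring.two_ne_zero (by rwa [ringChar.eq F p])
  have hφ : ∀ x : F, iterateFrobenius F p n x = x ^ p ^ n := fun x => iterateFrobenius_def p n x
  refine main_count (p ^ n) r (Nat.one_lt_pow hn.ne' hp'.one_lt) hr F hF h2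
    (iterateFrobenius F p n) hφ ?_ ?_ α β f
  · intro x
    rw [hφ, hφ, ← pow_mul, ← sq, ← hF, FiniteField.pow_card]
  · obtain ⟨a, b, hab⟩ := CharP.sq_add_sq F p (-1)
    exact ⟨a, b, map_natCast _ _, map_natCast _ _, by simpa using hab⟩
end
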